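/- For every t > 0 and every a > 0, (1/2)·e^{-2/a} · E[ M_t · (a/2 + A_t/2)^{-2} · exp( M_t / (a/2 + A_t/2) ) ] = (2/a²)·P[ A_t^{(1)} ≤ a ]. -/

import Mathlib

open MeasureTheory ProbabilityTheory Real Set

noncomputable section

/-- A standard one-dimensional Brownian motion `B` (with `B 0 = 0`, continuous
paths, Gaussian increments and independent increments) on a probability space
with measure `P`. -/
structure IsBrownianMotion {Ω : Type*} [MeasurableSpace Ω]
    (P : Measure Ω) (B : ℝ → Ω → ℝ) : Prop where
  isProbabilityMeasure : IsProbabilityMeasure P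
  measurable : ∀ t : ℝ, Measurable (B t)
  start : ∀ ω, B 0 ω = 0
  continuous_paths : ∀ ω, Continuous fun t => B t ω
  gaussian_increments : ∀ s t : ℝ, 0 ≤ s → s ≤ t →
    P.map (fun ω => B t ω - B s ω) = gaussianReal 0 (Real.toNNReal (t - s))
  indep_increments : ∀ t : ℕ → ℝ, Monotone t → 0 ≤ t 0 →
    iIndepFun
      (fun (i : ℕ) (ω : Ω) => B (t (i + 1)) ω - B (t i) ω) P

/-- The exponential martingale `M_t = exp (B_t - t/2)`. -/
def M {Ω : Type*} (B : ℝ → Ω → ℝ) (t : ℝ) (ω : Ω) : ℝ :=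
  Real.exp (B t ω - t / 2)

/-- The time integral `A_t = ∫_0^t exp (B_s - s/2) ds`. -/
def A {Ω : Type*} (B : ℝ → Ω → ℝ) (t : ℝ) (ω : Ω) : ℝ :=
  ∫ s in (0 : ℝ)..t, Real.exp (B s ω - s / 2)

/-- The time integral with drift `ν`: `A_t^{(ν)} = ∫_0^t exp (B_s + (ν - 1/2) s) ds`. -/
def Adrift {Ω : Type*} (B : ℝ → Ω → ℝ) (ν t : ℝ) (ω : Ω) : ℝ :=
  ∫ s in (0 : ℝ)..t, Real.exp (B s ω + (ν - 1 / 2) * s)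

variable {Ω : Type*} [MeasurableSpace Ω] (P : MeasureTheory.Measure Ω) (B : ℝ → Ω → ℝ)


open scoped ENNReal NNReal Topology
open Filter

lemma gauss_tilt (v : ℝ≥0) (hv : v ≠ 0) (θ : ℝ) :
    (gaussianReal 0 v).withDensity (fun x => ENNReal.ofReal (Real.exp (θ * x - θ ^ 2 * v / 2)))
      = (gaussianReal 0 v).map (fun x => x + θ * v) := by
  rw [gaussianReal_map_add_const, zero_add, gaussianReal_of_var_ne_zero _ hv,
    gaussianReal_of_var_ne_zero _ hv, ← withDensity_mul _ (by fun_prop) (by fun_prop)]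
  congr 1
  ext x
  simp only [gaussianPDF, Pi.mul_apply]
  rw [← ENNReal.ofReal_mul (gaussianPDFReal_nonneg _ _ _)]
  congr 1
  simp only [gaussianPDFReal]
  rw [mul_assoc, ← Real.exp_add]
  congr 2
  have : (v : ℝ) ≠ 0 := by exact_mod_cast hv
  field_simp
  ring

lemma pi_tilt (n : ℕ) (v : ℝ≥0) (hv : v ≠ 0) (θ : Fin n → ℝ) :
    (Measure.pi (fun _ : Fin n => gaussianReal 0 v)).withDensity
        (fun x => ∏ i, ENNReal.ofReal (Real.exp (θ i * x i - θ i ^ 2 * v / 2)))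
      = (Measure.pi (fun _ : Fin n => gaussianReal 0 v)).map (fun x i => x i + θ i * v) := by
  have h1 := Measure.pi_map_pi (μ := fun _ : Fin n => gaussianReal 0 v)
    (f := fun i x => x + θ i * v) (fun i => by fun_prop)
  rw [h1]
  symm
  have hp : ∀ i : Fin n, IsProbabilityMeasure ((gaussianReal 0 v).map (fun x => x + θ i * v)) :=
    fun i => Measure.isProbabilityMeasure_map (by fun_prop)
  refine Measure.pi_eq (fun s hs => ?_)
  rw [withDensity_apply _ (MeasurableSet.univ_pi hs), ← lintegral_indicator (MeasurableSet.univ_pi hs)]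
  let D : Fin n → ℝ → ℝ≥0∞ := fun i => (s i).indicator
    (fun y => ENNReal.ofReal (Real.exp (θ i * y - θ i ^ 2 * v / 2)))
  have hD : ∀ i, Measurable (D i) := fun i => Measurable.indicator (by fun_prop) (hs i)
  have e1 : ∀ x : Fin n → ℝ, (Set.univ.pi s).indicator
      (fun x => ∏ i, ENNReal.ofReal (Real.exp (θ i * x i - θ i ^ 2 * v / 2))) x
      = ∏ i, D i (x i) := by
    intro x
    by_cases hx : x ∈ Set.univ.pi s
    · rw [Set.indicator_of_mem hx]
      refine Finset.prod_congr rfl (fun i _ => ?_)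
      have hz : D i (x i) = ENNReal.ofReal (Real.exp (θ i * x i - θ i ^ 2 * v / 2)) :=
        Set.indicator_of_mem (hx i (Set.mem_univ i)) _
      exact hz.symm
    · rw [Set.indicator_of_notMem (M := ℝ≥0∞) hx]
      simp only [Set.mem_pi, Set.mem_univ, true_imp_iff, not_forall] at hx
      obtain ⟨i, hi⟩ := hx
      have hz : D i (x i) = 0 := Set.indicator_of_notMem hi _
      exact (Finset.prod_eq_zero (Finset.mem_univ i) hz).symm
  simp_rw [e1]
  have hind : iIndepFun (fun i (x : Fin n → ℝ) => D i (x i))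
      (Measure.pi (fun _ : Fin n => gaussianReal 0 v)) :=
    iIndepFun_pi (fun i => (hD i).aemeasurable)
  rw [lintegral_prod_eq_prod_lintegral_of_indepFun Finset.univ _ hind
    (fun i => (hD i).comp (measurable_pi_apply i))]
  refine Finset.prod_congr rfl (fun i _ => ?_)
  rw [← gauss_tilt v hv, withDensity_apply _ (hs i), ← lintegral_indicator (hs i)]
  exact (measurePreserving_eval (fun _ : Fin n => gaussianReal 0 v) i).lintegral_comp (hD i)

/-- vector of increments -/
def Xv {Ω : Type*} (B : ℝ → Ω → ℝ) (n : ℕ) (δ : ℝ) (ω : Ω) : Fin n → ℝ :=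
  fun i => B (((i : ℕ) + 1 : ℕ) * δ) ω - B ((i : ℕ) * δ) ω

lemma measurable_Xv {Ω : Type*} [MeasurableSpace Ω] {P : Measure Ω} {B : ℝ → Ω → ℝ}
    (hB : IsBrownianMotion P B) (n : ℕ) (δ : ℝ) : Measurable (Xv B n δ) :=
  measurable_pi_lambda _ (fun _ => (hB.measurable _).sub (hB.measurable _))

lemma map_Xv {Ω : Type*} [MeasurableSpace Ω] {P : Measure Ω} {B : ℝ → Ω → ℝ}
    (hB : IsBrownianMotion P B) (n : ℕ) (δ : ℝ) (hδ : 0 < δ) :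
    P.map (Xv B n δ) = Measure.pi (fun _ : Fin n => gaussianReal 0 δ.toNNReal) := by
  have := hB.isProbabilityMeasure
  have h := hB.indep_increments (fun i => (i : ℝ) * δ)
    (fun a b hab => mul_le_mul_of_nonneg_right (by exact_mod_cast hab) hδ.le) (by simp)
  have h2 := h.precomp (g := fun i : Fin n => (i : ℕ)) Fin.val_injective
  rw [iIndepFun_iff_map_fun_eq_pi_map] at h2
  · refine h2.trans ?_
    congr 1
    ext1 i
    have := hB.gaussian_increments ((i : ℕ) * δ) (((i : ℕ) + 1 : ℕ) * δ) (by positivity)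
      (by push_cast; nlinarith)
    refine this.trans ?_
    congr 2
    push_cast; ring
  · intro i
    exact ((hB.measurable _).sub (hB.measurable _)).aemeasurable

/-- Discrete Girsanov. -/
lemma discrete_tilt {Ω : Type*} [MeasurableSpace Ω] {P : Measure Ω} {B : ℝ → Ω → ℝ}
    (hB : IsBrownianMotion P B) (n : ℕ) (δ : ℝ) (hδ : 0 < δ) (θ : Fin n → ℝ)
    (g : (Fin n → ℝ) → ℝ) (hg : Measurable g) :
    ∫ ω, Real.exp (∑ i, (θ i * Xv B n δ ω i - θ i ^ 2 * δ / 2)) * g (Xv B n δ ω) ∂P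
      = ∫ ω, g (fun i => Xv B n δ ω i + θ i * δ) ∂P := by
  have hX := measurable_Xv hB n δ
  have e : (δ.toNNReal : ℝ) = δ := Real.coe_toNNReal δ hδ.le
  have h0 : δ.toNNReal ≠ 0 := by simpa using hδ
  have key := pi_tilt n δ.toNNReal h0 θ
  rw [e, ← map_Xv hB n δ hδ] at key
  have hsh : Measurable (fun (x : Fin n → ℝ) (i : Fin n) => x i + θ i * δ) :=
    measurable_pi_lambda _ (fun i => by fun_prop)
  have hgs : Measurable (fun x : Fin n → ℝ => g (fun i => x i + θ i * δ)) := hg.comp hsh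
  have k2 := congrArg (fun μ => ∫ x, g x ∂μ) key
  rw [integral_map hsh.aemeasurable hg.aestronglyMeasurable,
    integral_map hX.aemeasurable hgs.aestronglyMeasurable] at k2
  rw [← k2, integral_withDensity_eq_integral_toReal_smul (by fun_prop)
    (ae_of_all _ fun x => ENNReal.prod_lt_top (fun i _ => ENNReal.ofReal_lt_top)),
    integral_map hX.aemeasurable]
  · refine integral_congr_ae (ae_of_all _ fun ω => ?_)
    simp only [smul_eq_mul, ENNReal.toReal_prod]
    congr 1
    rw [Real.exp_sum]
    refine Finset.prod_congr rfl (fun i _ => ?_)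
    rw [ENNReal.toReal_ofReal (Real.exp_pos _).le]
  · refine Measurable.aestronglyMeasurable ?_
    simp only [smul_eq_mul]
    refine Measurable.mul ?_ hg
    fun_prop


/-- partial sums -/
def Sd (n : ℕ) (x : Fin n → ℝ) (k : ℕ) : ℝ := ∑ i : Fin n, if (i : ℕ) < k then x i else 0

lemma Sd_Xv {Ω : Type*} [MeasurableSpace Ω] {P : Measure Ω} {B : ℝ → Ω → ℝ}
    (hB : IsBrownianMotion P B) (n : ℕ) (δ : ℝ) (ω : Ω) (k : ℕ) (hk : k ≤ n) :
    Sd n (Xv B n δ ω) k = B (k * δ) ω := by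
  unfold Sd Xv
  rw [Fin.sum_univ_eq_sum_range (fun i => if i < k then B ((i + 1 : ℕ) * δ) ω - B (i * δ) ω else 0),
    ← Finset.sum_filter]
  have : (Finset.range n).filter (fun i => i < k) = Finset.range k := by
    ext i; simp; omega
  rw [this, Finset.sum_range_sub (fun i => B ((i : ℕ) * δ) ω)]
  simp [hB.start]

lemma Sd_shift (n : ℕ) (x θ : Fin n → ℝ) (δ : ℝ) (k : ℕ) :
    Sd n (fun i => x i + θ i * δ) k = Sd n x k + Sd n θ k * δ := by
  unfold Sd
  rw [Finset.sum_mul, ← Finset.sum_add_distrib]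
  refine Finset.sum_congr rfl (fun i _ => ?_)
  split_ifs <;> ring

lemma Sd_one (n k : ℕ) (hk : k ≤ n) : Sd n (fun _ => 1) k = k := by
  unfold Sd
  rw [Fin.sum_univ_eq_sum_range (fun i => if i < k then (1 : ℝ) else 0), ← Finset.sum_filter]
  have : (Finset.range n).filter (fun i => i < k) = Finset.range k := by
    ext i; simp; omega
  simp [this]

lemma Sd_single (n k : ℕ) (j : Fin n) :
    Sd n (Pi.single j 1) k = if (j : ℕ) < k then 1 else 0 := by
  unfold Sd
  rw [Finset.sum_eq_single j]
  · simp
  · intro b _ hb; simp [hb]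
  · simp

lemma measurable_Sd (n k : ℕ) : Measurable (fun x => Sd n x k) := by
  unfold Sd
  refine Finset.measurable_sum _ (fun i _ => ?_)
  split_ifs <;> fun_prop

/-- `N_s` -/
def Nf {Ω : Type*} (B : ℝ → Ω → ℝ) (s : ℝ) (ω : Ω) : ℝ := Real.exp (B s ω + s / 2)

lemma measurable_Nf {Ω : Type*} [MeasurableSpace Ω] {P : Measure Ω} {B : ℝ → Ω → ℝ}
    (hB : IsBrownianMotion P B) (s : ℝ) : Measurable (Nf B s) := by
  have := hB.measurable s
  unfold Nf; fun_prop

lemma measurable_M {Ω : Type*} [MeasurableSpace Ω] {P : Measure Ω} {B : ℝ → Ω → ℝ}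
    (hB : IsBrownianMotion P B) (s : ℝ) : Measurable (M B s) := by
  have := hB.measurable s
  unfold M; fun_prop

lemma integrable_exp_B {Ω : Type*} [MeasurableSpace Ω] {P : Measure Ω} {B : ℝ → Ω → ℝ}
    (hB : IsBrownianMotion P B) (s : ℝ) (hs : 0 ≤ s) :
    Integrable (fun ω => Real.exp (B s ω)) P := by
  have h := hB.gaussian_increments 0 s le_rfl hs
  simp only [hB.start, sub_zero] at h
  have h2 := integrable_exp_mul_gaussianReal (μ := 0) (v := s.toNNReal) 1
  rw [← h, integrable_map_measure (by fun_prop) (hB.measurable s).aemeasurable] at h2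
  simpa [Function.comp_def] using h2

lemma integrable_Nf {Ω : Type*} [MeasurableSpace Ω] {P : Measure Ω} {B : ℝ → Ω → ℝ}
    (hB : IsBrownianMotion P B) (s : ℝ) (hs : 0 ≤ s) : Integrable (Nf B s) P := by
  have := (integrable_exp_B hB s hs).mul_const (Real.exp (s / 2))
  unfold Nf
  simpa [Real.exp_add] using this

lemma integrable_M {Ω : Type*} [MeasurableSpace Ω] {P : Measure Ω} {B : ℝ → Ω → ℝ}
    (hB : IsBrownianMotion P B) (s : ℝ) (hs : 0 ≤ s) : Integrable (M B s) P := by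
  have := (integrable_exp_B hB s hs).mul_const (Real.exp (- (s / 2)))
  unfold M
  simpa [Real.exp_add, sub_eq_add_neg] using this

/-- Riemann sum -/
def Rs (f : ℝ → ℝ) (n : ℕ) (δ : ℝ) : ℝ := ∑ k ∈ Finset.range n, δ * f (k * δ)

lemma discrete_girsanov {Ω : Type*} [MeasurableSpace Ω] {P : Measure Ω} {B : ℝ → Ω → ℝ}
    (hB : IsBrownianMotion P B) (n : ℕ) (δ : ℝ) (hδ : 0 < δ) (F : ℝ × ℝ → ℝ) (hF : Measurable F) :
    ∫ ω, M B (n * δ) ω * F (M B (n * δ) ω, Rs (fun s => M B s ω) n δ) ∂P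
      = ∫ ω, F (Nf B (n * δ) ω, Rs (fun s => Nf B s ω) n δ) ∂P := by
  let g : (Fin n → ℝ) → ℝ := fun x => F (Real.exp (Sd n x n - n * δ / 2),
    ∑ k ∈ Finset.range n, δ * Real.exp (Sd n x k - k * δ / 2))
  have hg : Measurable g := by
    have := measurable_Sd n
    refine hF.comp (Measurable.prodMk (by fun_prop) ?_)
    exact Finset.measurable_sum _ (fun i _ => by fun_prop)
  have h := discrete_tilt hB n δ hδ (fun _ => 1) g hg
  convert h using 2
  · ext ω
    have e1 : ∑ i, ((1 : ℝ) * Xv B n δ ω i - 1 ^ 2 * δ / 2) = B (n * δ) ω - n * δ / 2 := by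
      rw [← Sd_Xv hB n δ ω n le_rfl]
      simp only [Sd, Fin.is_lt, if_true, Finset.sum_sub_distrib]
      simp; ring
    simp only [e1, g]
    rw [M, Sd_Xv hB n δ ω n le_rfl]
    congr 3
    refine Finset.sum_congr rfl (fun k hk => ?_)
    rw [Sd_Xv hB n δ ω k (Finset.mem_range.1 hk).le]; simp only [M]
  · ext ω
    simp only [g, Sd_shift]
    rw [Sd_Xv hB n δ ω n le_rfl, Sd_one n n le_rfl]
    congr 2
    · rw [Nf]; congr 1; ring
    · refine Finset.sum_congr rfl (fun k hk => ?_)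
      have hk' := (Finset.mem_range.1 hk).le
      rw [Sd_Xv hB n δ ω k hk', Sd_one n k hk']; simp only [Nf]; congr 2; ring

/-- tail sums -/
def Rt (f : ℝ → ℝ) (n : ℕ) (δ : ℝ) (j : ℕ) : ℝ :=
  ∑ k ∈ Finset.range n, if j < k then δ * f (k * δ) else 0

lemma discrete_ibp_one {Ω : Type*} [MeasurableSpace Ω] {P : Measure Ω} {B : ℝ → Ω → ℝ}
    (hB : IsBrownianMotion P B) (n : ℕ) (δ : ℝ) (hδ : 0 < δ) (F : ℝ × ℝ → ℝ) (hF : Measurable F)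
    (j : ℕ) (hj : j < n) :
    ∫ ω, Nf B ((j + 1 : ℕ) * δ) ω * F (Nf B (n * δ) ω, Rs (fun s => Nf B s ω) n δ) ∂P
      = Real.exp δ * ∫ ω, Nf B (j * δ) ω * F (Real.exp δ * Nf B (n * δ) ω,
          Rs (fun s => Nf B s ω) n δ +
            (Real.exp δ - 1) * Rt (fun s => Nf B s ω) n δ j) ∂P := by
  let g : (Fin n → ℝ) → ℝ := fun x => Real.exp (Sd n x j + j * δ / 2) *
    F (Real.exp (Sd n x n + n * δ / 2),
    ∑ k ∈ Finset.range n, δ * Real.exp (Sd n x k + k * δ / 2))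
  have hg : Measurable g := by
    have := measurable_Sd n
    refine Measurable.mul (by fun_prop) (hF.comp (Measurable.prodMk (by fun_prop) ?_))
    exact Finset.measurable_sum _ (fun i _ => by fun_prop)
  have h := discrete_tilt hB n δ hδ (Pi.single (⟨j, hj⟩ : Fin n) 1) g hg
  have e1 : ∀ ω, ∑ i, ((Pi.single (⟨j, hj⟩ : Fin n) 1 : Fin n → ℝ) i * Xv B n δ ω i
      - (Pi.single (⟨j, hj⟩ : Fin n) 1 : Fin n → ℝ) i ^ 2 * δ / 2)
      = B ((j + 1 : ℕ) * δ) ω - B (j * δ) ω - δ / 2 := by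
    intro ω
    rw [Finset.sum_eq_single (⟨j, hj⟩ : Fin n)]
    · simp [Xv]
    · intro b _ hb; simp [hb]
    · simp
  rw [← integral_const_mul]
  have h' := congrArg (fun r => Real.exp δ * r) h
  simp only [← integral_const_mul] at h'
  refine Eq.trans (integral_congr_ae (ae_of_all _ fun ω => ?_))
    (h'.trans (integral_congr_ae (ae_of_all _ fun ω => ?_)))
  · simp only [e1, g]
    rw [← mul_assoc, ← mul_assoc, Sd_Xv hB n δ ω n le_rfl, Sd_Xv hB n δ ω j hj.le, ← Real.exp_add,
      ← Real.exp_add]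
    congr 1
    · rw [Nf]; congr 1; push_cast; ring
    · congr 2
      refine Finset.sum_congr rfl (fun k hk => ?_)
      rw [Sd_Xv hB n δ ω k (Finset.mem_range.1 hk).le]; simp only [Nf]
  · symm
    simp only [g, Sd_shift, Sd_single]
    rw [Sd_Xv hB n δ ω n le_rfl, Sd_Xv hB n δ ω j hj.le]
    simp only [lt_irrefl, if_false, hj, if_true]
    congr 2
    · rw [Nf]; congr 1; ring
    · congr 2
      · rw [Nf, ← Real.exp_add]; congr 1; ring
      · rw [Rs, Rt, Finset.mul_sum, ← Finset.sum_add_distrib]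
        refine Finset.sum_congr rfl (fun k hk => ?_)
        rw [Sd_Xv hB n δ ω k (Finset.mem_range.1 hk).le]; simp only [Nf]
        split_ifs
        · have : B (k * δ) ω + 1 * δ + k * δ / 2 = δ + (B (k * δ) ω + k * δ / 2) := by ring
          rw [this, Real.exp_add δ]; ring
        · simp

lemma measurable_Rs {Ω : Type*} [MeasurableSpace Ω] {P : Measure Ω} {B : ℝ → Ω → ℝ}
    (hB : IsBrownianMotion P B) (n : ℕ) (δ : ℝ) : Measurable (fun ω => Rs (fun s => Nf B s ω) n δ) := by
  have := measurable_Nf hB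
  unfold Rs
  exact Finset.measurable_sum _ (fun i _ => by fun_prop)

lemma measurable_Rt {Ω : Type*} [MeasurableSpace Ω] {P : Measure Ω} {B : ℝ → Ω → ℝ}
    (hB : IsBrownianMotion P B) (n : ℕ) (δ : ℝ) (j : ℕ) :
    Measurable (fun ω => Rt (fun s => Nf B s ω) n δ j) := by
  have := measurable_Nf hB
  unfold Rt
  refine Finset.measurable_sum _ (fun i _ => ?_)
  split_ifs <;> fun_prop

lemma discrete_ibp {Ω : Type*} [MeasurableSpace Ω] {P : Measure Ω} {B : ℝ → Ω → ℝ}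
    (hB : IsBrownianMotion P B) (n : ℕ) (δ : ℝ) (hδ : 0 < δ) (F : ℝ × ℝ → ℝ) (hF : Measurable F)
    (C : ℝ) (hC : ∀ z, ‖F z‖ ≤ C) :
    ∫ ω, F (Nf B (n * δ) ω, Rs (fun s => Nf B s ω) n δ) *
        (Nf B (n * δ) ω - 1 - (Real.exp δ - 1) / δ * Rs (fun s => Nf B s ω) n δ) ∂P
      = ∫ ω, Real.exp δ * ∑ j ∈ Finset.range n, Nf B (j * δ) ω *
        (F (Real.exp δ * Nf B (n * δ) ω,
          Rs (fun s => Nf B s ω) n δ + (Real.exp δ - 1) * Rt (fun s => Nf B s ω) n δ j)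
        - F (Nf B (n * δ) ω, Rs (fun s => Nf B s ω) n δ)) ∂P := by
  have mN := measurable_Nf hB
  have mR := measurable_Rs hB n δ
  have mT := measurable_Rt hB n δ
  have I1 : ∀ k : ℕ, Integrable (fun ω => Nf B (k * δ) ω *
      F (Nf B (n * δ) ω, Rs (fun s => Nf B s ω) n δ)) P := fun k =>
    (integrable_Nf hB (k * δ) (by positivity)).mul_bdd (c := C)
      (hF.comp (by fun_prop)).aestronglyMeasurable (ae_of_all _ fun ω => hC _)
  have I2 : ∀ k j : ℕ, Integrable (fun ω => Nf B (k * δ) ω *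
      F (Real.exp δ * Nf B (n * δ) ω,
          Rs (fun s => Nf B s ω) n δ + (Real.exp δ - 1) * Rt (fun s => Nf B s ω) n δ j)) P :=
    fun k j =>
    (integrable_Nf hB (k * δ) (by positivity)).mul_bdd (c := C)
      (hF.comp (by fun_prop)).aestronglyMeasurable (ae_of_all _ fun ω => hC _)
  have eL : ∀ ω, F (Nf B (n * δ) ω, Rs (fun s => Nf B s ω) n δ) *
        (Nf B (n * δ) ω - 1 - (Real.exp δ - 1) / δ * Rs (fun s => Nf B s ω) n δ)
      = ∑ j ∈ Finset.range n, (Nf B ((j + 1 : ℕ) * δ) ω *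
          F (Nf B (n * δ) ω, Rs (fun s => Nf B s ω) n δ)
        - Real.exp δ * (Nf B (j * δ) ω * F (Nf B (n * δ) ω, Rs (fun s => Nf B s ω) n δ))) := by
    intro ω
    have h0 : Nf B ((0 : ℕ) * δ) ω = 1 := by simp [Nf, hB.start]
    have h1 := Finset.sum_range_sub (fun j : ℕ => Nf B (j * δ) ω) n
    rw [h0] at h1
    have h2 : (Real.exp δ - 1) / δ * Rs (fun s => Nf B s ω) n δ
        = ∑ j ∈ Finset.range n, (Real.exp δ - 1) * Nf B (j * δ) ω := by
      rw [Rs, Finset.mul_sum]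
      refine Finset.sum_congr rfl (fun k _ => ?_)
      field_simp
    rw [h2, ← h1, ← Finset.sum_sub_distrib, Finset.mul_sum]
    refine Finset.sum_congr rfl (fun k _ => ?_)
    ring
  have eR : ∀ ω, Real.exp δ * ∑ j ∈ Finset.range n, Nf B (j * δ) ω *
        (F (Real.exp δ * Nf B (n * δ) ω,
          Rs (fun s => Nf B s ω) n δ + (Real.exp δ - 1) * Rt (fun s => Nf B s ω) n δ j)
        - F (Nf B (n * δ) ω, Rs (fun s => Nf B s ω) n δ))
      = ∑ j ∈ Finset.range n, (Real.exp δ * (Nf B (j * δ) ω *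
        F (Real.exp δ * Nf B (n * δ) ω,
          Rs (fun s => Nf B s ω) n δ + (Real.exp δ - 1) * Rt (fun s => Nf B s ω) n δ j))
        - Real.exp δ * (Nf B (j * δ) ω * F (Nf B (n * δ) ω, Rs (fun s => Nf B s ω) n δ))) := by
    intro ω
    rw [Finset.mul_sum]
    refine Finset.sum_congr rfl (fun k _ => ?_)
    ring
  simp_rw [eL, eR]
  rw [integral_finsetSum, integral_finsetSum]
  rotate_left
  · intro j _
    exact ((I2 j j).const_mul _).sub ((I1 j).const_mul _)
  · intro j _
    exact (I1 (j + 1)).sub ((I1 j).const_mul _)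
  refine Finset.sum_congr rfl (fun j hj => ?_)
  rw [integral_sub (I1 (j + 1)) ((I1 j).const_mul _),
    integral_sub ((I2 j j).const_mul _) ((I1 j).const_mul _),
    discrete_ibp_one hB n δ hδ F hF j (Finset.mem_range.1 hj), integral_const_mul,
    integral_const_mul]


lemma tendsto_Rs (f : ℝ → ℝ) (hf : Continuous f) (t : ℝ) (ht : 0 < t) :
    Tendsto (fun n : ℕ => Rs f n (t / n)) atTop (𝓝 (∫ s in (0 : ℝ)..t, f s)) := by
  rw [Metric.tendsto_atTop]
  intro ε hε
  have hu := isCompact_Icc.uniformContinuousOn_of_continuous (hf.continuousOn (s := Set.Icc 0 t))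
  rw [Metric.uniformContinuousOn_iff] at hu
  obtain ⟨η, hη, hu⟩ := hu (ε / (2 * t)) (by positivity)
  obtain ⟨m, hm⟩ := exists_nat_gt (t / η)
  refine ⟨m + 1, fun n hn => ?_⟩
  have hn0 : (0 : ℝ) < n := by
    have : 0 < n := by omega
    exact_mod_cast this
  have hmn : (m : ℝ) < n := by exact_mod_cast (by omega : m < n)
  set δ := t / n with hδ
  have hδ0 : 0 < δ := by positivity
  have hδη : δ < η := by
    rw [hδ, div_lt_iff₀ hn0]
    rw [div_lt_iff₀ hη] at hm
    nlinarith
  have hnδ : n * δ = t := by rw [hδ]; field_simp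
  have hsum := intervalIntegral.sum_integral_adjacent_intervals (μ := volume) (f := f)
    (a := fun k : ℕ => (k : ℝ) * δ) (n := n) (fun k _ => hf.intervalIntegrable _ _)
  simp only [Nat.cast_zero, zero_mul, hnδ] at hsum
  rw [← hsum, Rs, dist_eq_norm, ← Finset.sum_sub_distrib]
  have hb : ∀ k ∈ Finset.range n,
      ‖δ * f (k * δ) - ∫ x in (k : ℝ) * δ..((k + 1 : ℕ) : ℝ) * δ, f x‖ ≤ ε / (2 * t) * δ := by
    intro k hk
    have hk' : (k : ℝ) + 1 ≤ n := by exact_mod_cast Finset.mem_range.1 hk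
    have hlen : ((k + 1 : ℕ) : ℝ) * δ - k * δ = δ := by push_cast; ring
    have hc : δ * f (k * δ) = ∫ x in (k : ℝ) * δ..((k + 1 : ℕ) : ℝ) * δ, f (k * δ) := by
      rw [intervalIntegral.integral_const, hlen, smul_eq_mul]
    rw [hc, ← intervalIntegral.integral_sub (by simp) (hf.intervalIntegrable _ _)]
    have := intervalIntegral.norm_integral_le_of_norm_le_const (a := (k : ℝ) * δ)
      (b := ((k + 1 : ℕ) : ℝ) * δ) (C := ε / (2 * t)) (f := fun x => f (k * δ) - f x) ?_
    · rwa [hlen, abs_of_pos hδ0] at this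
    · intro x hx
      rw [Set.uIoc_of_le (by push_cast; nlinarith)] at hx
      have h1 := hx.1
      have h2 := hx.2
      push_cast at h2
      have hk0 : (0 : ℝ) ≤ k * δ := by positivity
      have hkt : ((k : ℝ) + 1) * δ ≤ t := by rw [← hnδ]; gcongr
      rw [← dist_eq_norm]
      refine (hu _ ⟨hk0, by nlinarith⟩ _ ⟨by linarith, by linarith⟩ ?_).le
      rw [dist_eq_norm, Real.norm_eq_abs, abs_lt]
      constructor <;> nlinarith
  refine lt_of_le_of_lt ((norm_sum_le _ _).trans (Finset.sum_le_sum hb)) ?_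
  rw [Finset.sum_const, Finset.card_range, nsmul_eq_mul]
  have : n * (ε / (2 * t) * δ) = ε / 2 := by
    rw [mul_left_comm, hnδ]; field_simp
  rw [this]; linarith

lemma sum_tail (a : ℕ → ℝ) (n : ℕ) :
    ∑ j ∈ Finset.range n, a j * ∑ k ∈ Finset.range n, (if j < k then a k else 0)
      = ((∑ k ∈ Finset.range n, a k) ^ 2 - ∑ k ∈ Finset.range n, a k ^ 2) / 2 := by
  induction n with
  | zero => simp
  | succ n ih =>
    rw [Finset.sum_range_succ]
    have h1 : ∀ j ∈ Finset.range n, a j * ∑ k ∈ Finset.range (n + 1), (if j < k then a k else 0)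
        = a j * ∑ k ∈ Finset.range n, (if j < k then a k else 0) + a j * a n := by
      intro j hj
      rw [Finset.sum_range_succ, if_pos (Finset.mem_range.1 hj), mul_add]
    have h2 : ∑ k ∈ Finset.range (n + 1), (if n < k then a k else 0) = 0 := by
      refine Finset.sum_eq_zero (fun k hk => ?_)
      rw [if_neg]
      have := Finset.mem_range.1 hk
      omega
    rw [Finset.sum_congr rfl h1, h2, Finset.sum_add_distrib, ih, ← Finset.sum_mul,
      Finset.sum_range_succ, Finset.sum_range_succ]
    ring

lemma sum_Rt (f : ℝ → ℝ) (n : ℕ) (δ : ℝ) :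
    ∑ j ∈ Finset.range n, δ * f (j * δ) * Rt f n δ j
      = ((Rs f n δ) ^ 2 - δ * Rs (fun s => f s ^ 2) n δ) / 2 := by
  have := sum_tail (fun k => δ * f (k * δ)) n
  unfold Rt
  rw [this, Rs, Rs, Finset.mul_sum]
  congr 2
  refine Finset.sum_congr rfl (fun k _ => ?_)
  ring

lemma Rt_nonneg (f : ℝ → ℝ) (hf : ∀ s, 0 < f s) (n : ℕ) (δ : ℝ) (hδ : 0 < δ) (j : ℕ) :
    0 ≤ Rt f n δ j := by
  refine Finset.sum_nonneg (fun k _ => ?_)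
  have := hf (k * δ)
  split_ifs <;> positivity

lemma Rt_le (f : ℝ → ℝ) (hf : ∀ s, 0 < f s) (n : ℕ) (δ : ℝ) (hδ : 0 < δ) (j : ℕ) :
    Rt f n δ j ≤ Rs f n δ := by
  refine Finset.sum_le_sum (fun k _ => ?_)
  have := hf (k * δ)
  split_ifs
  · exact le_rfl
  · positivity

lemma tendsto_delta (t : ℝ) : Tendsto (fun n : ℕ => t / (n : ℝ)) atTop (𝓝 0) :=
  tendsto_const_div_atTop_nhds_zero_nat t

lemma tendsto_kappa (t : ℝ) (ht : 0 < t) :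
    Tendsto (fun n : ℕ => (Real.exp (t / n) - 1) / (t / n)) atTop (𝓝 1) := by
  have h := (Real.hasDerivAt_exp 0)
  rw [hasDerivAt_iff_tendsto_slope_zero] at h
  simp only [zero_add, Real.exp_zero, smul_eq_mul] at h
  have h2 : Tendsto (fun n : ℕ => t / (n : ℝ)) atTop (𝓝[≠] 0) := by
    refine tendsto_nhdsWithin_iff.2 ⟨tendsto_delta t, ?_⟩
    filter_upwards [eventually_gt_atTop 0] with n hn
    have : (0 : ℝ) < n := by exact_mod_cast hn
    simp only [Set.mem_compl_iff, Set.mem_singleton_iff]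
    positivity
  refine (h.comp h2).congr (fun n => ?_)
  exact inv_mul_eq_div _ _

lemma path_limit (f : ℝ → ℝ) (hf : Continuous f) (hf0 : ∀ s, 0 < f s) (t : ℝ) (ht : 0 < t)
    (x : ℝ) (F : ℝ × ℝ → ℝ) (F' : ℝ × ℝ →L[ℝ] ℝ)
    (hF : HasStrictFDerivAt F F' (x, ∫ s in (0 : ℝ)..t, f s)) :
    Tendsto (fun n : ℕ => Real.exp (t / n) * ∑ j ∈ Finset.range n, f (j * (t / n)) *
        (F (Real.exp (t / n) * x, Rs f n (t / n) + (Real.exp (t / n) - 1) * Rt f n (t / n) j)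
        - F (x, Rs f n (t / n)))) atTop
      (𝓝 (F' (x * ∫ s in (0 : ℝ)..t, f s, (∫ s in (0 : ℝ)..t, f s) ^ 2 / 2))) := by
  set u := ∫ s in (0 : ℝ)..t, f s with hu
  have hU : Tendsto (fun n : ℕ => Rs f n (t / n)) atTop (𝓝 u) := tendsto_Rs f hf t ht
  have hU2 := tendsto_Rs (fun s => f s ^ 2) (by fun_prop) t ht
  have hδ := tendsto_delta t
  have hκ := tendsto_kappa t ht
  have he : Tendsto (fun n : ℕ => Real.exp (t / n)) atTop (𝓝 1) := by
    have := (Real.continuous_exp.tendsto 0).comp hδ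
    simpa [Function.comp_def] using this
  -- main term
  have hT : Tendsto (fun n : ℕ => Real.exp (t / n) * ((Real.exp (t / n) - 1) / (t / n)) *
      F' (x * Rs f n (t / n),
        ((Rs f n (t / n)) ^ 2 - (t / n) * Rs (fun s => f s ^ 2) n (t / n)) / 2)) atTop
      (𝓝 (1 * 1 * F' (x * u, (u ^ 2 - 0 * ∫ s in (0 : ℝ)..t, f s ^ 2) / 2))) := by
    refine (he.mul hκ).mul ((F'.continuous.tendsto _).comp ?_)
    refine Tendsto.prodMk_nhds (hU.const_mul x) ?_
    exact ((hU.pow 2).sub (hδ.mul hU2)).div_const 2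
  simp only [one_mul, zero_mul, sub_zero] at hT
  have hErr : Tendsto (fun n : ℕ => Real.exp (t / n) * ∑ j ∈ Finset.range n, f (j * (t / n)) *
        (F (Real.exp (t / n) * x, Rs f n (t / n) + (Real.exp (t / n) - 1) * Rt f n (t / n) j)
        - F (x, Rs f n (t / n))) - Real.exp (t / n) * ((Real.exp (t / n) - 1) / (t / n)) *
      F' (x * Rs f n (t / n),
        ((Rs f n (t / n)) ^ 2 - (t / n) * Rs (fun s => f s ^ 2) n (t / n)) / 2)) atTop (𝓝 0) := by
    have hC : Tendsto (fun n : ℕ => Real.exp (t / n) * ((Real.exp (t / n) - 1) / (t / n)) *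
        (Rs f n (t / n) * (|x| + Rs f n (t / n)))) atTop (𝓝 (1 * 1 * (u * (|x| + u)))) :=
      (he.mul hκ).mul (hU.mul (hU.const_add |x|))
    set C := 1 * 1 * (u * (|x| + u)) with hCdef
    have hu0 : 0 ≤ u := intervalIntegral.integral_nonneg ht.le (fun s _ => (hf0 s).le)
    have hC0 : 0 ≤ C := by positivity
    have hρ : Tendsto (fun n : ℕ => |Rs f n (t / n) - u| +
        (Real.exp (t / n) - 1) * (|x| + Rs f n (t / n))) atTop
        (𝓝 (|u - u| + (1 - 1) * (|x| + u))) :=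
      ((hU.sub_const u).abs).add ((he.sub_const 1).mul (hU.const_add |x|))
    simp only [sub_self, abs_zero, zero_mul, add_zero] at hρ
    rw [Metric.tendsto_nhds]
    intro ε hε
    have hlo := hF.isLittleO.def (show 0 < ε / (2 * (C + 1)) by positivity)
    rw [Metric.eventually_nhds_iff] at hlo
    obtain ⟨r, hr, hlo⟩ := hlo
    filter_upwards [eventually_gt_atTop 0, hC.eventually (gt_mem_nhds (show C < C + 1 by linarith)),
      hρ.eventually (gt_mem_nhds hr)] with n hn hCn hρn
    have hn0 : (0 : ℝ) < n := by exact_mod_cast hn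
    set δ := t / (n : ℝ) with hδdef
    have hδ0 : 0 < δ := by positivity
    have hE : 0 < Real.exp δ - 1 := by
      have := Real.add_one_lt_exp hδ0.ne'
      linarith
    have hUn : 0 ≤ Rs f n δ := Finset.sum_nonneg (fun k _ => by have := hf0 (k * δ); positivity)
    set E := Real.exp δ - 1 with hEdef
    -- rewrite the main term as a sum
    have hmain : Real.exp δ * (E / δ) * F' (x * Rs f n δ,
        ((Rs f n δ) ^ 2 - δ * Rs (fun s => f s ^ 2) n δ) / 2)
        = Real.exp δ * ∑ j ∈ Finset.range n, f (j * δ) * F' (E * x, E * Rt f n δ j) := by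
      rw [mul_assoc]
      congr 1
      have e1 : ∀ j ∈ Finset.range n, f (j * δ) * F' (E * x, E * Rt f n δ j)
          = F' ((f (j * δ)) • (E * x, E * Rt f n δ j)) := by
        intro j _
        rw [map_smul, smul_eq_mul]
      rw [Finset.sum_congr rfl e1, ← map_sum, ← smul_eq_mul (E / δ), ← map_smul]
      congr 1
      rw [← sum_Rt]
      refine Prod.ext ?_ ?_
      · simp only [Prod.smul_mk, Prod.fst_sum, smul_eq_mul, Rs, Finset.mul_sum]
        refine Finset.sum_congr rfl (fun k _ => ?_)
        field_simp
      · simp only [Prod.smul_mk, Prod.snd_sum, smul_eq_mul, Finset.mul_sum]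
        refine Finset.sum_congr rfl (fun k _ => ?_)
        field_simp
    rw [hmain, ← mul_sub, ← Finset.sum_sub_distrib, dist_zero_right]
    have hterm : ∀ j ∈ Finset.range n,
        ‖f (j * δ) * (F (Real.exp δ * x, Rs f n δ + E * Rt f n δ j) - F (x, Rs f n δ))
          - f (j * δ) * F' (E * x, E * Rt f n δ j)‖
        ≤ (δ * f (j * δ)) * (ε / (2 * (C + 1)) * (E / δ * (|x| + Rs f n δ))) := by
      intro j _
      have hR0 := Rt_nonneg f hf0 n δ hδ0 j
      have hR1 := Rt_le f hf0 n δ hδ0 j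
      have hx0 := abs_nonneg x
      have hfj := hf0 (j * δ)
      have hER : E * Rt f n δ j ≤ E * (|x| + Rs f n δ) := by
        apply mul_le_mul_of_nonneg_left _ hE.le; linarith
      have hEx : E * |x| ≤ E * (|x| + Rs f n δ) := by
        apply mul_le_mul_of_nonneg_left _ hE.le; linarith
      have hER0 : 0 ≤ E * Rt f n δ j := by positivity
      have hdiff : ((Real.exp δ * x, Rs f n δ + E * Rt f n δ j) : ℝ × ℝ) - (x, Rs f n δ)
          = (E * x, E * Rt f n δ j) := by
        rw [Prod.mk_sub_mk, hEdef]; congr 1 <;> ring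
      have hnorm : ‖((E * x, E * Rt f n δ j) : ℝ × ℝ)‖ ≤ E * (|x| + Rs f n δ) := by
        rw [Prod.norm_def]
        refine max_le ?_ ?_
        · simp only [norm_mul, Real.norm_eq_abs, abs_of_pos hE]; exact hEx
        · rw [Real.norm_eq_abs, abs_of_nonneg hER0]; exact hER
      have hp := hlo (y := ((Real.exp δ * x, Rs f n δ + E * Rt f n δ j), (x, Rs f n δ))) ?_
      · simp only [hdiff] at hp
        rw [← mul_sub, norm_mul, Real.norm_eq_abs, abs_of_pos hfj]
        have hp2 := hp.trans (mul_le_mul_of_nonneg_left hnorm (by positivity))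
        calc f (j * δ) * _ ≤ f (j * δ) * (ε / (2 * (C + 1)) * (E * (|x| + Rs f n δ))) :=
              mul_le_mul_of_nonneg_left hp2 hfj.le
          _ = _ := by field_simp
      · rw [Prod.dist_eq, Prod.dist_eq, Prod.dist_eq]
        have hEp : 0 ≤ E * (|x| + Rs f n δ) := by positivity
        have ha := abs_nonneg (Rs f n δ - u)
        have hb := abs_add_le (Rs f n δ - u) (E * Rt f n δ j)
        rw [abs_of_nonneg hER0] at hb
        have hc : Real.exp δ * x - x = E * x := by rw [hEdef]; ring
        have hd : Rs f n δ + E * Rt f n δ j - u = Rs f n δ - u + E * Rt f n δ j := by ring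
        simp only [Real.dist_eq, hc, hd, abs_mul, abs_of_pos hE, sub_self, abs_zero]
        refine max_lt (max_lt ?_ ?_) (max_lt ?_ ?_) <;> linarith
    rw [norm_mul, Real.norm_eq_abs, abs_of_pos (Real.exp_pos δ)]
    have hs := (norm_sum_le _ _).trans (Finset.sum_le_sum hterm)
    rw [← Finset.sum_mul] at hs
    calc Real.exp δ * _ ≤ Real.exp δ * _ := mul_le_mul_of_nonneg_left hs (Real.exp_pos δ).le
      _ = ε / (2 * (C + 1)) * (Real.exp δ * (E / δ) * (Rs f n δ * (|x| + Rs f n δ))) := by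
          rw [Rs]; ring
      _ ≤ ε / (2 * (C + 1)) * (C + 1) := mul_le_mul_of_nonneg_left hCn.le (by positivity)
      _ = ε / 2 := by field_simp
      _ < ε := by linarith
  have := hErr.add hT
  simpa using this


lemma Nf_pos {Ω : Type*} (B : ℝ → Ω → ℝ) (s : ℝ) (ω : Ω) : 0 < Nf B s ω := Real.exp_pos _

lemma continuous_Nf {Ω : Type*} [MeasurableSpace Ω] {P : Measure Ω} {B : ℝ → Ω → ℝ}
    (hB : IsBrownianMotion P B) (ω : Ω) : Continuous (fun s => Nf B s ω) := by
  have := hB.continuous_paths ω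
  unfold Nf; fun_prop

lemma continuous_M {Ω : Type*} [MeasurableSpace Ω] {P : Measure Ω} {B : ℝ → Ω → ℝ}
    (hB : IsBrownianMotion P B) (ω : Ω) : Continuous (fun s => M B s ω) := by
  have := hB.continuous_paths ω
  unfold M; fun_prop

lemma Adrift_eq {Ω : Type*} (B : ℝ → Ω → ℝ) (t : ℝ) (ω : Ω) :
    Adrift B 1 t ω = ∫ s in (0 : ℝ)..t, Nf B s ω := by
  unfold Adrift Nf
  congr 1; ext s; congr 1; ring

lemma Adrift_pos {Ω : Type*} [MeasurableSpace Ω] {P : Measure Ω} {B : ℝ → Ω → ℝ}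
    (hB : IsBrownianMotion P B) (t : ℝ) (ht : 0 < t) (ω : Ω) : 0 < Adrift B 1 t ω := by
  rw [Adrift_eq]
  exact intervalIntegral.intervalIntegral_pos_of_pos
    ((continuous_Nf hB ω).intervalIntegrable _ _) (fun s => Nf_pos B s ω) ht

lemma A_pos {Ω : Type*} [MeasurableSpace Ω] {P : Measure Ω} {B : ℝ → Ω → ℝ}
    (hB : IsBrownianMotion P B) (t : ℝ) (ht : 0 < t) (ω : Ω) : 0 < A B t ω := by
  exact intervalIntegral.intervalIntegral_pos_of_pos
    ((continuous_M hB ω).intervalIntegrable _ _) (fun s => Real.exp_pos _) ht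

lemma measurable_Adrift {Ω : Type*} [MeasurableSpace Ω] {P : Measure Ω} {B : ℝ → Ω → ℝ}
    (hB : IsBrownianMotion P B) (t : ℝ) (ht : 0 < t) : Measurable (Adrift B 1 t) := by
  refine measurable_of_tendsto_metrizable (f := fun (n : ℕ) ω => Rs (fun s => Nf B s ω) n (t / n))
    (fun n => measurable_Rs hB n _) ?_
  rw [tendsto_pi_nhds]
  intro ω
  rw [Adrift_eq]
  exact tendsto_Rs _ (continuous_Nf hB ω) t ht

lemma measurable_RsM {Ω : Type*} [MeasurableSpace Ω] {P : Measure Ω} {B : ℝ → Ω → ℝ}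
    (hB : IsBrownianMotion P B) (n : ℕ) (δ : ℝ) : Measurable (fun ω => Rs (fun s => M B s ω) n δ) := by
  have := measurable_M hB
  unfold Rs
  exact Finset.measurable_sum _ (fun i _ => by fun_prop)

lemma measurable_A {Ω : Type*} [MeasurableSpace Ω] {P : Measure Ω} {B : ℝ → Ω → ℝ}
    (hB : IsBrownianMotion P B) (t : ℝ) (ht : 0 < t) : Measurable (A B t) := by
  refine measurable_of_tendsto_metrizable (f := fun (n : ℕ) ω => Rs (fun s => M B s ω) n (t / n))
    (fun n => measurable_RsM hB n _) ?_
  rw [tendsto_pi_nhds]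
  intro ω
  exact tendsto_Rs _ (continuous_M hB ω) t ht

/-- Girsanov for bounded continuous functions. -/
lemma girsanov_bc {Ω : Type*} [MeasurableSpace Ω] {P : Measure Ω} {B : ℝ → Ω → ℝ}
    (hB : IsBrownianMotion P B) (t : ℝ) (ht : 0 < t) (F : ℝ × ℝ → ℝ) (hF : Continuous F)
    (C : ℝ) (hC : ∀ z, ‖F z‖ ≤ C) :
    ∫ ω, M B t ω * F (M B t ω, A B t ω) ∂P = ∫ ω, F (Nf B t ω, Adrift B 1 t ω) ∂P := by
  have := hB.isProbabilityMeasure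
  have mN := measurable_Nf hB t
  have mM := measurable_M hB t
  have l1 : Tendsto (fun n : ℕ => ∫ ω, M B t ω * F (M B t ω, Rs (fun s => M B s ω) n (t / n)) ∂P)
      atTop (𝓝 (∫ ω, M B t ω * F (M B t ω, A B t ω) ∂P)) := by
    refine tendsto_integral_of_dominated_convergence (fun ω => M B t ω * C) ?_
      ((integrable_M hB t ht.le).mul_const C) ?_ ?_
    · intro n
      have := measurable_RsM hB n (t / n)
      exact (mM.mul (hF.measurable.comp (by fun_prop))).aestronglyMeasurable
    · refine fun n => ae_of_all _ fun ω => ?_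
      have hp : 0 < M B t ω := Real.exp_pos _
      rw [norm_mul, Real.norm_eq_abs, abs_of_pos hp]
      exact mul_le_mul_of_nonneg_left (hC _) hp.le
    · refine ae_of_all _ fun ω => ?_
      refine Tendsto.const_mul _ ((hF.tendsto _).comp ?_)
      exact Tendsto.prodMk_nhds tendsto_const_nhds (tendsto_Rs _ (continuous_M hB ω) t ht)
  have l2 : Tendsto (fun n : ℕ => ∫ ω, F (Nf B t ω, Rs (fun s => Nf B s ω) n (t / n)) ∂P)
      atTop (𝓝 (∫ ω, F (Nf B t ω, Adrift B 1 t ω) ∂P)) := by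
    refine tendsto_integral_of_dominated_convergence (fun ω => C) ?_
      (integrable_const _) ?_ ?_
    · intro n
      have := measurable_Rs hB n (t / n)
      exact (hF.measurable.comp (by fun_prop)).aestronglyMeasurable
    · exact fun n => ae_of_all _ fun ω => hC _
    · refine ae_of_all _ fun ω => ?_
      refine ((hF.tendsto _).comp ?_)
      rw [Adrift_eq]
      exact Tendsto.prodMk_nhds tendsto_const_nhds (tendsto_Rs _ (continuous_Nf hB ω) t ht)
  refine tendsto_nhds_unique l1 (l2.congr' ?_)
  filter_upwards [eventually_gt_atTop 0] with n hn
  have hn0 : (0 : ℝ) < n := by exact_mod_cast hn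
  have h := discrete_girsanov hB n (t / n) (by positivity) F hF.measurable
  have e : (n : ℝ) * (t / n) = t := by field_simp
  rw [e] at h
  exact h.symm

/-- Girsanov. -/
lemma girsanov {Ω : Type*} [MeasurableSpace Ω] {P : Measure Ω} {B : ℝ → Ω → ℝ}
    (hB : IsBrownianMotion P B) (t : ℝ) (ht : 0 < t) (F : ℝ × ℝ → ℝ) (hF : Measurable F) :
    ∫ ω, M B t ω * F (M B t ω, A B t ω) ∂P = ∫ ω, F (Nf B t ω, Adrift B 1 t ω) ∂P := by
  have := hB.isProbabilityMeasure
  have mN := measurable_Nf hB t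
  have mM := measurable_M hB t
  have mA := measurable_A hB t ht
  have mD := measurable_Adrift hB t ht
  have mMA : Measurable (fun ω => (M B t ω, A B t ω)) := mM.prodMk mA
  have mND : Measurable (fun ω => (Nf B t ω, Adrift B 1 t ω)) := mN.prodMk mD
  have fin : IsFiniteMeasure (P.withDensity (fun ω => ENNReal.ofReal (M B t ω))) :=
    isFiniteMeasure_withDensity_ofReal (integrable_M hB t ht.le).2
  have hI : ∀ G : ℝ × ℝ → ℝ, Measurable G →
      ∫ z, G z ∂((P.withDensity (fun ω => ENNReal.ofReal (M B t ω))).map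
        (fun ω => (M B t ω, A B t ω))) = ∫ ω, M B t ω * G (M B t ω, A B t ω) ∂P := by
    intro G hG
    rw [integral_map mMA.aemeasurable hG.aestronglyMeasurable,
      integral_withDensity_eq_integral_toReal_smul (by fun_prop)
      (ae_of_all _ fun x => ENNReal.ofReal_lt_top)]
    refine integral_congr_ae (ae_of_all _ fun ω => ?_)
    have hp : 0 < M B t ω := Real.exp_pos _
    simp only [smul_eq_mul, ENNReal.toReal_ofReal hp.le]
  have key : (P.withDensity (fun ω => ENNReal.ofReal (M B t ω))).map (fun ω => (M B t ω, A B t ω))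
      = P.map (fun ω => (Nf B t ω, Adrift B 1 t ω)) := by
    refine ext_of_forall_integral_eq_of_IsFiniteMeasure (fun f => ?_)
    rw [hI f f.continuous.measurable, integral_map mND.aemeasurable
      f.continuous.measurable.aestronglyMeasurable]
    exact girsanov_bc hB t ht f f.continuous ‖f‖ (fun z => f.norm_coe_le_norm z)
  rw [← hI F hF, key, integral_map mND.aemeasurable hF.aestronglyMeasurable]

/-- Integration by parts. -/
lemma core {Ω : Type*} [MeasurableSpace Ω] {P : Measure Ω} {B : ℝ → Ω → ℝ}
    (hB : IsBrownianMotion P B) (t : ℝ) (ht : 0 < t) (F : ℝ × ℝ → ℝ) (hF : ContDiff ℝ 1 F)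
    (hc : HasCompactSupport F) :
    ∫ ω, F (Nf B t ω, Adrift B 1 t ω) * (Nf B t ω - 1 - Adrift B 1 t ω) ∂P
      = ∫ ω, fderiv ℝ F (Nf B t ω, Adrift B 1 t ω)
          (Nf B t ω * Adrift B 1 t ω, (Adrift B 1 t ω) ^ 2 / 2) ∂P := by
  have := hB.isProbabilityMeasure
  have mN := measurable_Nf hB
  obtain ⟨C, hC⟩ := hF.continuous.bounded_above_of_compact_support hc
  have hC0 : 0 ≤ C := (norm_nonneg _).trans (hC 0)
  obtain ⟨L, hL⟩ := ContDiff.lipschitzWith_of_hasCompactSupport hc hF (by simp)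
  obtain ⟨K, hK⟩ := hc.isCompact.isBounded.subset_closedBall (0 : ℝ × ℝ)
  have hK' : ∀ x u : ℝ, (K < x ∨ K < u) → F (x, u) = 0 := by
    intro x u hxu
    by_contra hne
    have hm := hK (subset_tsupport F hne)
    rw [mem_closedBall_zero_iff, Prod.norm_def] at hm
    have h1 := (le_max_left _ _).trans hm
    have h2 := (le_max_right _ _).trans hm
    simp only [Real.norm_eq_abs] at h1 h2
    have := le_abs_self x
    have := le_abs_self u
    rcases hxu with h | h <;> linarith
  have hexp : ∀ δ : ℝ, 0 < δ → (Real.exp δ - 1) / δ ≤ Real.exp δ := by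
    intro δ hδ
    rw [div_le_iff₀ hδ]
    have h1 := Real.add_one_le_exp (-δ)
    have h2 : Real.exp δ * Real.exp (-δ) = 1 := by rw [← Real.exp_add]; simp
    have h3 := Real.exp_pos δ
    nlinarith
  have hdel : ∀ n : ℕ, 0 < n → 0 < t / (n : ℝ) ∧ t / (n : ℝ) ≤ t := by
    intro n hn
    have h1 : (1 : ℝ) ≤ n := by exact_mod_cast hn
    exact ⟨by positivity, div_le_self ht.le h1⟩
  have hRs0 : ∀ (n : ℕ) (δ : ℝ) (ω : Ω), 0 < δ → 0 ≤ Rs (fun s => Nf B s ω) n δ := by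
    intro n δ ω hδ
    exact Finset.sum_nonneg (fun k _ => by have := Nf_pos B (k * δ) ω; positivity)
  have l1 : Tendsto (fun n : ℕ => ∫ ω, F (Nf B t ω, Rs (fun s => Nf B s ω) n (t / n)) *
        (Nf B t ω - 1 - (Real.exp (t / n) - 1) / (t / n) * Rs (fun s => Nf B s ω) n (t / n)) ∂P)
      atTop (𝓝 (∫ ω, F (Nf B t ω, Adrift B 1 t ω) * (Nf B t ω - 1 - Adrift B 1 t ω) ∂P)) := by
    refine tendsto_integral_filter_of_dominated_convergence
      (fun ω => C * (|K| + 1 + Real.exp t * |K|)) ?_ ?_ (integrable_const _) ?_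
    · refine Eventually.of_forall fun n => ?_
      have := measurable_Rs hB n (t / n)
      exact ((hF.continuous.measurable.comp (by fun_prop)).mul (by fun_prop)).aestronglyMeasurable
    · filter_upwards [eventually_gt_atTop 0] with n hn
      refine ae_of_all _ fun ω => ?_
      obtain ⟨hδ0, hδt⟩ := hdel n hn
      set δ := t / (n : ℝ)
      set U := Rs (fun s => Nf B s ω) n δ with hU
      have hU0 : 0 ≤ U := hRs0 n δ ω hδ0
      have hx0 := Nf_pos B t ω
      by_cases h : K < Nf B t ω ∨ K < U
      · rw [hK' _ _ h, zero_mul, norm_zero]; positivity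
      · push Not at h
        rw [norm_mul]
        refine mul_le_mul (hC _) ?_ (norm_nonneg _) hC0
        have k1 : (Real.exp δ - 1) / δ ≤ Real.exp t :=
          (hexp δ hδ0).trans (Real.exp_le_exp.2 hδt)
        have k0 : 0 ≤ (Real.exp δ - 1) / δ := by
          have := Real.add_one_le_exp δ
          apply div_nonneg _ hδ0.le; linarith
        have k2 : (Real.exp δ - 1) / δ * U ≤ Real.exp t * |K| :=
          mul_le_mul k1 (h.2.trans (le_abs_self K)) hU0 (Real.exp_pos t).le
        have k3 : 0 ≤ (Real.exp δ - 1) / δ * U := mul_nonneg k0 hU0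
        have := le_abs_self K
        rw [Real.norm_eq_abs, abs_le]
        constructor <;> linarith [h.1, abs_nonneg K]
    · refine ae_of_all _ fun ω => ?_
      have hU := tendsto_Rs _ (continuous_Nf hB ω) t ht
      rw [← Adrift_eq] at hU
      refine Tendsto.mul ((hF.continuous.tendsto _).comp
        (Tendsto.prodMk_nhds tendsto_const_nhds hU)) ?_
      have := ((tendsto_kappa t ht).mul hU).const_sub (Nf B t ω - 1)
      simpa using this
  have l2 : Tendsto (fun n : ℕ => ∫ ω, Real.exp (t / n) *
        ∑ j ∈ Finset.range n, Nf B (j * (t / n)) ω *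
        (F (Real.exp (t / n) * Nf B t ω, Rs (fun s => Nf B s ω) n (t / n) +
            (Real.exp (t / n) - 1) * Rt (fun s => Nf B s ω) n (t / n) j)
        - F (Nf B t ω, Rs (fun s => Nf B s ω) n (t / n))) ∂P)
      atTop (𝓝 (∫ ω, fderiv ℝ F (Nf B t ω, Adrift B 1 t ω)
          (Nf B t ω * Adrift B 1 t ω, (Adrift B 1 t ω) ^ 2 / 2) ∂P)) := by
    refine tendsto_integral_filter_of_dominated_convergence
      (fun ω => Real.exp t * (Real.exp t * |K| * (L * |K|))) ?_ ?_ (integrable_const _) ?_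
    · refine Eventually.of_forall fun n => ?_
      have := measurable_Rs hB n (t / n)
      have := measurable_Rt hB n (t / n)
      refine Measurable.aestronglyMeasurable (Measurable.const_mul ?_ _)
      refine Finset.measurable_sum _ (fun j _ => (mN _).mul ?_)
      exact (hF.continuous.measurable.comp (by fun_prop)).sub
        (hF.continuous.measurable.comp (by fun_prop))
    · filter_upwards [eventually_gt_atTop 0] with n hn
      refine ae_of_all _ fun ω => ?_
      obtain ⟨hδ0, hδt⟩ := hdel n hn
      set δ := t / (n : ℝ)
      set U := Rs (fun s => Nf B s ω) n δ with hU
      have hU0 : 0 ≤ U := hRs0 n δ ω hδ0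
      have hx0 := Nf_pos B t ω
      have hE : 0 ≤ Real.exp δ - 1 := by
        have := Real.add_one_le_exp δ
        linarith
      have k1 : (Real.exp δ - 1) / δ ≤ Real.exp t :=
          (hexp δ hδ0).trans (Real.exp_le_exp.2 hδt)
      have hterm : ∀ j ∈ Finset.range n, ‖Nf B (j * δ) ω *
        (F (Real.exp δ * Nf B t ω, U + (Real.exp δ - 1) * Rt (fun s => Nf B s ω) n δ j)
          - F (Nf B t ω, U))‖ ≤ δ * Nf B (j * δ) ω * ((Real.exp δ - 1) / δ * (L * |K|)) := by
        intro j _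
        have hfj := Nf_pos B (j * δ) ω
        have hR0 := Rt_nonneg (fun s => Nf B s ω) (fun s => Nf_pos B s ω) n δ hδ0 j
        have hR1 := Rt_le (fun s => Nf B s ω) (fun s => Nf_pos B s ω) n δ hδ0 j
        rw [norm_mul, Real.norm_eq_abs, abs_of_pos hfj]
        have e : δ * Nf B (j * δ) ω * ((Real.exp δ - 1) / δ * (L * |K|))
          = Nf B (j * δ) ω * (L * ((Real.exp δ - 1) * |K|)) := by field_simp
        rw [e]
        refine mul_le_mul_of_nonneg_left ?_ hfj.le
        by_cases h : K < Nf B t ω ∨ K < U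
        · rw [hK' _ _ h, hK', sub_zero, norm_zero]
          · positivity
          · rcases h with h | h
            · left; nlinarith
            · right
              have : 0 ≤ (Real.exp δ - 1) * Rt (fun s => Nf B s ω) n δ j := mul_nonneg hE hR0
              linarith
        · push Not at h
          have hd := hL.dist_le_mul
            (Real.exp δ * Nf B t ω, U + (Real.exp δ - 1) * Rt (fun s => Nf B s ω) n δ j)
            (Nf B t ω, U)
          rw [dist_eq_norm] at hd
          refine hd.trans (mul_le_mul_of_nonneg_left ?_ L.2)
          have hKa := le_abs_self K
          rw [Prod.dist_eq]
          refine max_le ?_ ?_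
          · have : Real.exp δ * Nf B t ω - Nf B t ω = (Real.exp δ - 1) * Nf B t ω := by ring
            simp only [Real.dist_eq, this]
            rw [abs_of_nonneg (mul_nonneg hE hx0.le)]
            exact mul_le_mul_of_nonneg_left (by linarith [h.1]) hE
          · simp only [Real.dist_eq, add_sub_cancel_left]
            rw [abs_of_nonneg (mul_nonneg hE hR0)]
            exact mul_le_mul_of_nonneg_left (by linarith [h.2]) hE
      rw [norm_mul, Real.norm_eq_abs, abs_of_pos (Real.exp_pos δ)]
      by_cases h : K < Nf B t ω ∨ K < U
      · have hz : ∑ j ∈ Finset.range n, Nf B (j * δ) ω *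
          (F (Real.exp δ * Nf B t ω, U + (Real.exp δ - 1) * Rt (fun s => Nf B s ω) n δ j)
          - F (Nf B t ω, U)) = 0 := by
          refine Finset.sum_eq_zero (fun j _ => ?_)
          have hR0 := Rt_nonneg (fun s => Nf B s ω) (fun s => Nf_pos B s ω) n δ hδ0 j
          rw [hK' _ _ h, hK', sub_zero, mul_zero]
          rcases h with h | h
          · left; nlinarith
          · right
            have : 0 ≤ (Real.exp δ - 1) * Rt (fun s => Nf B s ω) n δ j := mul_nonneg hE hR0
            linarith
        rw [hz, norm_zero, mul_zero]; positivity
      · push Not at h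
        have hs := (norm_sum_le _ _).trans (Finset.sum_le_sum hterm)
        rw [← Finset.sum_mul] at hs
        refine mul_le_mul (Real.exp_le_exp.2 hδt) (hs.trans ?_) (norm_nonneg _) (Real.exp_pos t).le
        have hs2 : ∑ j ∈ Finset.range n, δ * Nf B (j * δ) ω = U := rfl
        rw [hs2]
        have hLK : 0 ≤ (L : ℝ) * |K| := by positivity
        calc U * ((Real.exp δ - 1) / δ * (L * |K|)) ≤ |K| * (Real.exp t * (L * |K|)) :=
              mul_le_mul (h.2.trans (le_abs_self K)) (mul_le_mul_of_nonneg_right k1 hLK)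
                (mul_nonneg (div_nonneg hE hδ0.le) hLK) (abs_nonneg K)
          _ = _ := by ring
    · refine ae_of_all _ fun ω => ?_
      have hs : HasStrictFDerivAt F (fderiv ℝ F (Nf B t ω, Adrift B 1 t ω))
          (Nf B t ω, Adrift B 1 t ω) := hF.contDiffAt.hasStrictFDerivAt (by simp)
      rw [Adrift_eq] at hs ⊢
      exact path_limit _ (continuous_Nf hB ω) (fun s => Nf_pos B s ω) t ht _ F _ hs
  refine tendsto_nhds_unique l1 (l2.congr' ?_)
  filter_upwards [eventually_gt_atTop 0] with n hn
  have hn0 : (0 : ℝ) < n := by exact_mod_cast hn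
  have h := discrete_ibp hB n (t / n) (by positivity) F hF.continuous.measurable C hC
  have e : (n : ℝ) * (t / n) = t := by field_simp
  rw [e] at h
  exact h.symm


theorem integrable_comp_NA {Ω : Type*} [MeasurableSpace Ω] {P : Measure Ω} {B : ℝ → Ω → ℝ}
    [IsProbabilityMeasure P]
    (hB : IsBrownianMotion P B) (t : ℝ) (ht : 0 < t) (K : ℝ × ℝ → ℝ) (hK : Continuous K)
    (hc : HasCompactSupport K) :
    Integrable (fun ω => K (Nf B t ω, Adrift B 1 t ω)) P := by
  obtain ⟨C, hC⟩ := hc.exists_bound_of_continuous hK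
  refine Integrable.of_bound (C := C) ?_ (Eventually.of_forall fun ω => hC _)
  exact (hK.measurable.comp ((measurable_Nf hB t).prodMk
    (measurable_Adrift hB t ht))).aestronglyMeasurable

/-- The weight. -/
def Ew (x u : ℝ) : ℝ := (u⁻¹) ^ 2 * Real.exp (2 * x * u⁻¹ + 2 * u⁻¹)

/-- The test functions transported along the flow. -/
def Fs (G : ℝ × ℝ → ℝ) (s : ℝ) (z : ℝ × ℝ) : ℝ :=
  Ew z.1 z.2 * G (z.1 * (z.2⁻¹) ^ 2, z.2⁻¹ + s)

theorem Fs_zero (G : ℝ × ℝ → ℝ) (s : ℝ) (z : ℝ × ℝ)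
    (h : G (z.1 * (z.2⁻¹) ^ 2, z.2⁻¹ + s) = 0) : Fs G s z = 0 := by
  rw [Fs, h, mul_zero]

theorem contDiff_Fs (G : ℝ × ℝ → ℝ) (hG : ContDiff ℝ 1 G) (c δ m : ℝ)
    (hδ : 0 < δ) (hm : 0 < m) (hc : 0 < c)
    (h0 : ∀ p w, (w < c + δ ∨ c + m < w ∨ m < |p|) → G (p, w) = 0) (s : ℝ)
    (hs : -δ/2 < s) (hs' : s < c + δ / 2) : ContDiff ℝ 1 (Fs G s) := by
  rw [contDiff_iff_contDiffAt]
  rintro ⟨x0, u0⟩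
  by_cases hu : u0 = 0
  · subst hu
    have : Fs G s =ᶠ[𝓝 ((x0, 0) : ℝ × ℝ)] fun _ => 0 := by
      have hpos : 0 < (c + m + δ)⁻¹ := by positivity
      have : ∀ᶠ z : ℝ × ℝ in 𝓝 ((x0, 0) : ℝ × ℝ), z.2 < (c + m + δ)⁻¹ :=
        continuous_snd.continuousAt.eventually_lt_const (by simpa using hpos)
      filter_upwards [this] with z hz
      apply Fs_zero
      apply h0
      by_cases h : z.2 ≤ 0
      · left
        have : z.2⁻¹ ≤ 0 := inv_nonpos.2 h
        linarith
      · right; left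
        push Not at h
        have : c + m + δ < z.2⁻¹ := by
          rw [lt_inv_comm₀ (by positivity) h]; exact hz
        linarith
    exact contDiffAt_const.congr_of_eventuallyEq this
  · unfold Fs Ew
    have h1 : ContDiffAt ℝ 1 (fun z : ℝ × ℝ => z.2⁻¹) (x0, u0) := contDiffAt_snd.inv hu
    have h2 : ContDiffAt ℝ 1 (fun z : ℝ × ℝ => z.1) (x0, u0) := contDiffAt_fst
    refine ContDiffAt.mul ((h1.pow 2).mul (ContDiffAt.exp ?_)) ?_
    · exact ((contDiffAt_const.mul h2).mul h1).add (contDiffAt_const.mul h1)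
    · exact hG.contDiffAt.comp _ ((h2.mul (h1.pow 2)).prodMk (h1.add contDiffAt_const))

theorem hcs_Fs (G : ℝ × ℝ → ℝ) (c δ m : ℝ)
    (hδ : 0 < δ) (hm : 0 < m) (hc : 0 < c)
    (h0 : ∀ p w, (w < c + δ ∨ c + m < w ∨ m < |p|) → G (p, w) = 0) (s : ℝ)
    (hs' : s < c + δ / 2) : HasCompactSupport (Fs G s) := by
  apply HasCompactSupport.of_support_subset_isCompact
    (K := Set.Icc (-(m * (2 / δ) ^ 2)) (m * (2/δ)^2) ×ˢ Set.Icc 0 (2/δ))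
    (isCompact_Icc.prod isCompact_Icc)
  rintro ⟨x, u⟩ hz
  have hG : G (x * (u⁻¹) ^ 2, u⁻¹ + s) ≠ 0 := fun h => hz (Fs_zero G s (x, u) h)
  have h : ¬ (u⁻¹ + s < c + δ ∨ c + m < u⁻¹ + s ∨ m < |x * (u⁻¹) ^ 2|) :=
    fun h => hG (h0 _ _ h)
  push Not at h
  obtain ⟨h1, h2, h3⟩ := h
  have hq : δ / 2 < u⁻¹ := by linarith
  have hu : 0 < u := inv_pos.1 (by linarith [half_pos hδ])
  have hu2 : u ≤ 2 / δ := by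
    rw [← inv_div δ 2, le_inv_comm₀ hu (by positivity)]; exact hq.le
  have hx : |x| ≤ m * (2 / δ)^2 := by
    have : |x| = |x * u⁻¹ ^ 2| * u ^ 2 := by
      rw [abs_mul, abs_of_pos (show 0 < u⁻¹^2 by positivity)]; field_simp
    rw [this]
    gcongr
  exact ⟨abs_le.1 hx, hu.le, hu2⟩

theorem fderiv_Fs (G : ℝ × ℝ → ℝ) (hG : ContDiff ℝ 1 G) (s : ℝ) (hF : ContDiff ℝ 1 (Fs G s))
    (x u : ℝ) (hu : 0 < u) :
    Ew x u * fderiv ℝ G (x * (u⁻¹) ^ 2, u⁻¹ + s) (0, 1) =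
      2 * (Fs G s (x, u) * (x - 1 - u) - fderiv ℝ (Fs G s) (x, u) (x * u, u ^ 2 / 2)) := by
  set q := u⁻¹ with hq
  have hq0 : 0 < q := inv_pos.2 hu
  set p := x * q ^ 2 with hp
  have hu' : u = q⁻¹ := by rw [hq, inv_inv]
  have hx' : x = p * (q⁻¹)^2 := by rw [hp]; field_simp
  -- the curve
  have hi : HasDerivAt (fun τ : ℝ => (q - τ)⁻¹) (u ^ 2) 0 := by
    have := ((hasDerivAt_id (0:ℝ)).const_sub q).inv (by simpa using hq0.ne')
    refine HasDerivAt.congr_deriv this ?_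
    simp [hu']
  have hx2 : HasDerivAt (fun τ : ℝ => p * ((q - τ)⁻¹) ^ 2) (2 * x * u) 0 := by
    have := (hi.pow 2).const_mul p
    refine HasDerivAt.congr_deriv this ?_
    simp only [sub_zero, ← hu', hx']
    ring
  have hγ := hx2.prodMk hi
  have hL : HasDerivAt (fun τ : ℝ => Fs G s (p * ((q - τ)⁻¹) ^ 2, (q - τ)⁻¹))
      (fderiv ℝ (Fs G s) (x, u) (2 * x * u, u ^ 2)) 0 := by
    have hd : HasFDerivAt (Fs G s) (fderiv ℝ (Fs G s) (x, u))
        ((fun τ : ℝ => (p * ((q - τ)⁻¹) ^ 2, (q - τ)⁻¹)) 0) := by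
      have : ((fun τ : ℝ => (p * ((q - τ)⁻¹) ^ 2, (q - τ)⁻¹)) 0) = (x, u) := by
        simp only [sub_zero]; rw [← hx', ← hu']
      rw [this]
      exact (hF.differentiable (by norm_num) _).hasFDerivAt
    exact hd.comp_hasDerivAt (0:ℝ) hγ
  have hlin : HasDerivAt (fun τ : ℝ => q - τ) (-1) 0 := by
    simpa using (hasDerivAt_id (0:ℝ)).const_sub q
  have hE : HasDerivAt (fun τ : ℝ => (q - τ) ^ 2 * Real.exp (2 * (p * (q - τ)⁻¹) + 2 * (q - τ)))
      (Ew x u * (2 * x - 2 - 2 * u)) 0 := by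
    have := (hlin.pow 2).mul (((hi.const_mul p).const_mul 2).add (hlin.const_mul 2)).exp
    refine HasDerivAt.congr_deriv this ?_
    have e1 : 2 * x * u⁻¹ + 2 * u⁻¹ = 2 * (p * (q - 0)⁻¹) + 2 * (q - 0) := by
      rw [hx', hu']; field_simp; simp; field_simp
    simp only [Ew, e1, sub_zero, Pi.pow_apply, Pi.add_apply]
    rw [hx', hu']
    field_simp
    push_cast
    ring
  have hGd : HasDerivAt (fun τ : ℝ => G (p, q - τ + s)) (-fderiv ℝ G (p, q + s) (0, 1)) 0 := by
    have hd : HasFDerivAt G (fderiv ℝ G (p, q + s))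
        ((fun τ : ℝ => (p, q - τ + s)) 0) := by
      simp only [sub_zero]
      exact (hG.differentiable (by norm_num) _).hasFDerivAt
    have h2 := (hasDerivAt_const (0:ℝ) p).prodMk (hlin.add_const s)
    have := hd.comp_hasDerivAt (0:ℝ) h2
    refine HasDerivAt.congr_deriv this ?_
    rw [← map_neg]; simp only [Prod.neg_mk, neg_zero]
  have hR := hE.mul hGd
  have heq : (fun τ : ℝ => Fs G s (p * ((q - τ)⁻¹) ^ 2, (q - τ)⁻¹)) =ᶠ[𝓝 0]
      (fun τ : ℝ => (q - τ) ^ 2 * Real.exp (2 * (p * (q - τ)⁻¹) + 2 * (q - τ)))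
        * (fun τ : ℝ => G (p, q - τ + s)) := by
    have : ∀ᶠ τ : ℝ in 𝓝 0, τ < q := gt_mem_nhds hq0 |>.mono fun _ h => h
    filter_upwards [this] with τ hτ
    have hne : q - τ ≠ 0 := by linarith [hτ] |> fun h : 0 < q - τ => h.ne'
    simp only [Fs, Ew, inv_inv, Pi.mul_apply]
    congr 3
    · field_simp
    · field_simp
  have huniq := hL.unique (hR.congr_of_eventuallyEq heq)
  have hsc : fderiv ℝ (Fs G s) (x, u) (2 * x * u, u ^ 2) =
      2 * fderiv ℝ (Fs G s) (x, u) (x * u, u ^ 2 / 2) := by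
    rw [← smul_eq_mul (2:ℝ) (fderiv ℝ (Fs G s) (x, u) (x * u, u ^ 2 / 2)), ← map_smul]
    congr 1
    simp only [Prod.smul_mk, smul_eq_mul]
    congr 1 <;> ring
  rw [mul_sub, ← hsc, huniq]
  have e1 : Real.exp (2 * (p * q⁻¹) + 2 * q) * q ^ 2 = Ew x u := by
    rw [Ew, ← hq, mul_comm]
    congr 2
    rw [hx']; field_simp
  simp only [sub_zero]
  rw [mul_comm (q ^ 2), e1]
  simp only [Fs]
  rw [← hq, ← hp]
  ring


theorem Fs_deriv_bound (G : ℝ × ℝ → ℝ) (hG : ContDiff ℝ 1 G) (c δ m : ℝ)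
    (hδ : 0 < δ) (hm : 0 < m) (hc : 0 < c)
    (h0 : ∀ p w, (w < c + δ ∨ c + m < w ∨ m < |p|) → G (p, w) = 0) :
    ∃ C, ∀ s, -δ/2 < s → s < c + δ / 2 → ∀ x u, 0 < u →
      ‖Ew x u * fderiv ℝ G (x * (u⁻¹) ^ 2, u⁻¹ + s) (0, 1)‖ ≤ C := by
  have hcs : HasCompactSupport G := by
    apply HasCompactSupport.of_support_subset_isCompact
      (K := Set.Icc (-m) m ×ˢ Set.Icc (c + δ) (c + m)) (isCompact_Icc.prod isCompact_Icc)
    rintro ⟨p, w⟩ hz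
    have h : ¬ (w < c + δ ∨ c + m < w ∨ m < |p|) := fun h => hz (h0 _ _ h)
    push Not at h
    exact ⟨abs_le.1 h.2.2, h.1, h.2.1⟩
  obtain ⟨C, hC⟩ := (hcs.fderiv (𝕜 := ℝ)).exists_bound_of_continuous
    (hG.continuous_fderiv (by norm_num))
  have hC0 : 0 ≤ C := (norm_nonneg _).trans (hC 0)
  refine ⟨((c + m + δ) ^ 2 * Real.exp (2 * (m * (2 / δ)) + 2 * (c + m + δ))) *
    (C * ‖((0, 1) : ℝ × ℝ)‖), ?_⟩
  intro s hs hs' x u hu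
  by_cases h : (u⁻¹ + s < c + δ ∨ c + m < u⁻¹ + s ∨ m < |x * (u⁻¹) ^ 2|)
  · have : G =ᶠ[𝓝 (x * (u⁻¹) ^ 2, u⁻¹ + s)] fun _ => 0 := by
      rcases h with h | h | h
      · have := Tendsto.eventually_lt_const h
          ((continuous_snd (X := ℝ) (Y := ℝ)).tendsto (x * (u⁻¹) ^ 2, u⁻¹ + s))
        filter_upwards [this] with z hz using h0 _ _ (Or.inl hz)
      · have := Tendsto.eventually_const_lt h
          ((continuous_snd (X := ℝ) (Y := ℝ)).tendsto (x * (u⁻¹) ^ 2, u⁻¹ + s))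
        filter_upwards [this] with z hz using h0 _ _ (Or.inr (Or.inl hz))
      · have := Tendsto.eventually_const_lt h
          ((continuous_fst (X := ℝ) (Y := ℝ)).abs.tendsto (x * (u⁻¹) ^ 2, u⁻¹ + s))
        filter_upwards [this] with z hz using h0 _ _ (Or.inr (Or.inr hz))
    rw [this.fderiv_eq]
    simp
    positivity
  · push Not at h
    obtain ⟨h1, h2, h3⟩ := h
    rw [norm_mul]
    have hq : δ / 2 < u⁻¹ := by linarith
    have hu2 : u ≤ 2 / δ := by
      rw [← inv_div δ 2, le_inv_comm₀ hu (by positivity)]; exact hq.le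
    gcongr
    · rw [Ew, Real.norm_of_nonneg (by positivity)]
      have e1 : 2 * x * u⁻¹ = 2 * ((x * u⁻¹ ^ 2) * u) := by field_simp
      have e2 : (x * u⁻¹ ^ 2) * u ≤ m * (2 / δ) := by
        gcongr
        exact (le_abs_self _).trans h3
      have e3 : u⁻¹ ≤ c + m + δ := by linarith
      have e4 : 2 * x * u⁻¹ + 2 * u⁻¹ ≤ 2 * (m * (2 / δ)) + 2 * (c + m + δ) := by
        rw [e1]; linarith
      gcongr
    · exact (ContinuousLinearMap.le_opNorm _ _).trans (by gcongr; exact hC _)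

theorem flow_eq {Ω : Type*} [MeasurableSpace Ω] {P : Measure Ω} {B : ℝ → Ω → ℝ}
    [IsProbabilityMeasure P]
    (hB : IsBrownianMotion P B) (t : ℝ) (ht : 0 < t)
    (G : ℝ × ℝ → ℝ) (hG : ContDiff ℝ 1 G) (c δ m : ℝ)
    (hδ : 0 < δ) (hm : 0 < m) (hc : 0 < c)
    (h0 : ∀ p w, (w < c + δ ∨ c + m < w ∨ m < |p|) → G (p, w) = 0) :
    ∫ ω, Fs G c (Nf B t ω, Adrift B 1 t ω) ∂P = ∫ ω, Fs G 0 (Nf B t ω, Adrift B 1 t ω) ∂P := by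
  obtain ⟨C, hC⟩ := Fs_deriv_bound G hG c δ m hδ hm hc h0
  have hNA : Measurable fun ω => (Nf B t ω, Adrift B 1 t ω) :=
    (measurable_Nf hB t).prodMk (measurable_Adrift hB t ht)
  have hD : ∀ s ∈ Set.Ioo (-δ/2) (c + δ/2),
      HasDerivAt (fun s => ∫ ω, Fs G s (Nf B t ω, Adrift B 1 t ω) ∂P) 0 s := by
    intro s hs
    have hF := fun s (hs : s ∈ Set.Ioo (-δ/2) (c + δ/2)) =>
      contDiff_Fs G hG c δ m hδ hm hc h0 s hs.1 hs.2
    have hFc := fun s (hs : s ∈ Set.Ioo (-δ/2) (c + δ/2)) =>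
      hcs_Fs G c δ m hδ hm hc h0 s hs.2
    have hnh : Set.Ioo (-δ/2) (c + δ/2) ∈ 𝓝 s := Ioo_mem_nhds hs.1 hs.2
    have key := (hasDerivAt_integral_of_dominated_loc_of_deriv_le (μ := P)
      (F := fun s ω => Fs G s (Nf B t ω, Adrift B 1 t ω))
      (F' := fun s ω => Ew (Nf B t ω) (Adrift B 1 t ω) *
        fderiv ℝ G (Nf B t ω * ((Adrift B 1 t ω)⁻¹) ^ 2, (Adrift B 1 t ω)⁻¹ + s) (0, 1))
      (bound := fun _ => C) hnh ?_ ?_ ?_ ?_ ?_ ?_).2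
    · refine key.congr_deriv ?_
      have e : ∀ ω, Ew (Nf B t ω) (Adrift B 1 t ω) *
        fderiv ℝ G (Nf B t ω * ((Adrift B 1 t ω)⁻¹) ^ 2, (Adrift B 1 t ω)⁻¹ + s) (0, 1) =
          2 * (Fs G s (Nf B t ω, Adrift B 1 t ω) * (Nf B t ω - 1 - Adrift B 1 t ω) -
            fderiv ℝ (Fs G s) (Nf B t ω, Adrift B 1 t ω)
              (Nf B t ω * Adrift B 1 t ω, (Adrift B 1 t ω) ^ 2 / 2)) :=
        fun ω => fderiv_Fs G hG s (hF s hs) _ _ (Adrift_pos hB t ht ω)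
      simp_rw [e]
      rw [integral_const_mul, integral_sub, core hB t ht _ (hF s hs) (hFc s hs), sub_self, mul_zero]
      · exact integrable_comp_NA hB t ht (fun z => Fs G s z * (z.1 - 1 - z.2))
          ((hF s hs).continuous.mul (by fun_prop)) (hFc s hs).mul_right
      · refine integrable_comp_NA hB t ht
          (fun z => fderiv ℝ (Fs G s) z (z.1 * z.2, z.2 ^ 2 / 2)) ?_ ?_
        · exact ((hF s hs).continuous_fderiv (by norm_num)).clm_apply (by fun_prop)
        · refine ((hFc s hs).fderiv (𝕜 := ℝ)).mono ?_
          intro z hz hz'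
          exact hz (by simp [hz'])
    · filter_upwards [hnh] with r hr
      exact ((hF r hr).continuous.measurable.comp hNA).aestronglyMeasurable
    · exact integrable_comp_NA hB t ht _ (hF s hs).continuous (hFc s hs)
    · apply Measurable.aestronglyMeasurable
      have h1 : Measurable fun z : ℝ × ℝ => Ew z.1 z.2 := by
        unfold Ew; fun_prop
      have h2 : Measurable fun z : ℝ × ℝ => fderiv ℝ G z (0, 1) :=
        ((hG.continuous_fderiv (by norm_num)).clm_apply continuous_const).measurable
      have h3 : Measurable fun z : ℝ × ℝ => (z.1 * (z.2⁻¹) ^ 2, z.2⁻¹ + s) := by fun_prop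
      exact (h1.mul (h2.comp h3)).comp hNA
    · exact Eventually.of_forall fun ω r hr => hC r hr.1 hr.2 _ _ (Adrift_pos hB t ht ω)
    · exact integrable_const C
    · refine Eventually.of_forall fun ω r hr => ?_
      unfold Fs
      have hd : HasFDerivAt G _ ((fun r : ℝ => (Nf B t ω * ((Adrift B 1 t ω)⁻¹) ^ 2, (Adrift B 1 t ω)⁻¹ + r)) r) :=
        (hG.differentiable (by norm_num) _).hasFDerivAt
      have h2 := (hasDerivAt_const r (Nf B t ω * ((Adrift B 1 t ω)⁻¹) ^ 2)).prodMk
        ((hasDerivAt_id r).const_add (Adrift B 1 t ω)⁻¹)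
      exact (hd.comp_hasDerivAt r h2).const_mul _
  refine constant_of_has_deriv_right_zero (a := 0) (b := c)
    (f := fun s => ∫ ω, Fs G s (Nf B t ω, Adrift B 1 t ω) ∂P) ?_ ?_ c ⟨hc.le, le_rfl⟩
  · intro s hs
    exact (hD s ⟨by linarith [hs.1], by linarith [hs.2]⟩).continuousAt.continuousWithinAt
  · intro s hs
    exact (hD s ⟨by linarith [hs.1], by linarith [hs.2]⟩).hasDerivWithinAt


/-- Cutoff in the first variable. -/
def chi (m p : ℝ) : ℝ := Real.smoothTransition (m - p) * Real.smoothTransition (m + p)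

/-- Cutoff in the second variable. -/
def psi (m q : ℝ) : ℝ := Real.smoothTransition (m * q - 1) * Real.smoothTransition (m - q)

theorem chi_nonneg (m p : ℝ) : 0 ≤ chi m p :=
  mul_nonneg (Real.smoothTransition.nonneg _) (Real.smoothTransition.nonneg _)

theorem psi_nonneg (m p : ℝ) : 0 ≤ psi m p :=
  mul_nonneg (Real.smoothTransition.nonneg _) (Real.smoothTransition.nonneg _)

theorem chi_le_one (m p : ℝ) : chi m p ≤ 1 :=
  mul_le_one₀ (Real.smoothTransition.le_one _) (Real.smoothTransition.nonneg _)
    (Real.smoothTransition.le_one _)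

theorem psi_le_one (m p : ℝ) : psi m p ≤ 1 :=
  mul_le_one₀ (Real.smoothTransition.le_one _) (Real.smoothTransition.nonneg _)
    (Real.smoothTransition.le_one _)

theorem chi_eq_zero (m p : ℝ) (h : m < |p|) : chi m p = 0 := by
  unfold chi
  rcases lt_abs.1 h with h | h
  · rw [Real.smoothTransition.zero_of_nonpos (by linarith), zero_mul]
  · rw [Real.smoothTransition.zero_of_nonpos (x := m + p) (by linarith), mul_zero]

theorem psi_eq_zero (m q : ℝ) (hm : 0 < m) (h : q ≤ m⁻¹ ∨ m < q) : psi m q = 0 := by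
  unfold psi
  rcases h with h | h
  · rw [Real.smoothTransition.zero_of_nonpos, zero_mul]
    have : m * q ≤ m * m⁻¹ := by gcongr
    rw [mul_inv_cancel₀ hm.ne'] at this
    linarith
  · rw [Real.smoothTransition.zero_of_nonpos (x := m - q) (by linarith), mul_zero]

theorem continuous_chi (m : ℝ) : Continuous (chi m) := by
  unfold chi
  exact (Real.smoothTransition.continuous.comp (by fun_prop)).mul
    (Real.smoothTransition.continuous.comp (by fun_prop))

theorem continuous_psi (m : ℝ) : Continuous (psi m) := by
  unfold psi
  exact (Real.smoothTransition.continuous.comp (by fun_prop)).mul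
    (Real.smoothTransition.continuous.comp (by fun_prop))

theorem contDiff_chi (m : ℝ) : ContDiff ℝ 1 (chi m) := by
  unfold chi
  exact ((Real.smoothTransition.contDiff (n := 1)).comp (by fun_prop)).mul
    ((Real.smoothTransition.contDiff (n := 1)).comp (by fun_prop))

theorem contDiff_psi (m : ℝ) : ContDiff ℝ 1 (psi m) := by
  unfold psi
  exact ((Real.smoothTransition.contDiff (n := 1)).comp (by fun_prop)).mul
    ((Real.smoothTransition.contDiff (n := 1)).comp (by fun_prop))

theorem tendsto_chi (p : ℝ) : Tendsto (fun n : ℕ => chi (n + 1) p) atTop (𝓝 1) := by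
  apply tendsto_const_nhds.congr'
  obtain ⟨k, hk⟩ := exists_nat_ge |p|
  filter_upwards [eventually_ge_atTop k] with n hn
  have hn' : (k : ℝ) ≤ n := by exact_mod_cast hn
  have := abs_le.1 (hk.trans hn')
  unfold chi
  rw [Real.smoothTransition.one_of_one_le (by linarith),
    Real.smoothTransition.one_of_one_le (by linarith), mul_one]

theorem tendsto_psi (q : ℝ) (hq : 0 < q) : Tendsto (fun n : ℕ => psi (n + 1) q) atTop (𝓝 1) := by
  apply tendsto_const_nhds.congr'
  obtain ⟨k, hk⟩ := exists_nat_ge (q + 2 / q)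
  filter_upwards [eventually_ge_atTop k] with n hn
  have hn' : (k : ℝ) ≤ n := by exact_mod_cast hn
  have h1 : 0 < 2 / q := by positivity
  have h2 : 2 ≤ (n + 1 : ℝ) * q := by
    rw [← div_le_iff₀ hq]; linarith
  unfold psi
  rw [Real.smoothTransition.one_of_one_le (by linarith),
    Real.smoothTransition.one_of_one_le (by linarith), mul_one]

theorem tendsto_psi' (q : ℝ) :
    Tendsto (fun n : ℕ => psi (n + 1) q) atTop (𝓝 (if 0 < q then 1 else 0)) := by
  split_ifs with h
  · exact tendsto_psi q h
  · apply tendsto_const_nhds.congr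
    intro n
    have : (0:ℝ) ≤ (n + 1 : ℝ)⁻¹ := by positivity
    rw [psi_eq_zero _ _ (by positivity) (Or.inl (by linarith))]

/-- The test function. -/
def Gm (c m : ℝ) (z : ℝ × ℝ) : ℝ :=
  chi m z.1 * psi m (z.2 - c) * ((z.2⁻¹) ^ 2 * Real.exp (-(2 * z.1 * z.2⁻¹ + 2 * z.2)))

theorem Gm_zero (c m : ℝ) (hm : 0 < m) (p w : ℝ)
    (h : w < c + m⁻¹ ∨ c + m < w ∨ m < |p|) : Gm c m (p, w) = 0 := by
  unfold Gm
  rcases h with h | h | h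
  · rw [psi_eq_zero m _ hm (Or.inl (by simp only; linarith))]; simp
  · rw [psi_eq_zero m _ hm (Or.inr (by simp only; linarith))]; simp
  · rw [chi_eq_zero m _ h]; simp

theorem contDiff_Gm (c m : ℝ) (hc : 0 < c) (hm : 0 < m) : ContDiff ℝ 1 (Gm c m) := by
  rw [contDiff_iff_contDiffAt]
  rintro ⟨p, w⟩
  by_cases hw : w = 0
  · subst hw
    have h : (0 : ℝ) < c + m⁻¹ := by positivity
    have := Tendsto.eventually_lt_const h
          ((continuous_snd (X := ℝ) (Y := ℝ)).tendsto (p, 0))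
    apply contDiffAt_const (c := (0:ℝ)) |>.congr_of_eventuallyEq
    filter_upwards [this] with z hz
    exact Gm_zero c m hm z.1 z.2 (Or.inl hz)
  · unfold Gm
    have h1 : ContDiffAt ℝ 1 (fun z : ℝ × ℝ => z.2⁻¹) (p, w) := contDiffAt_snd.inv hw
    have h2 : ContDiffAt ℝ 1 (fun z : ℝ × ℝ => z.1) (p, w) := contDiffAt_fst
    have h3 : ContDiffAt ℝ 1 (fun z : ℝ × ℝ => z.2) (p, w) := contDiffAt_snd
    refine ContDiffAt.mul (ContDiffAt.mul ?_ ?_) ((h1.pow 2).mul (ContDiffAt.exp ?_))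
    · exact (contDiff_chi m).contDiffAt.comp _ h2
    · exact (contDiff_psi m).contDiffAt.comp _ (h3.sub contDiffAt_const)
    · exact (((contDiffAt_const.mul h2).mul h1).add (contDiffAt_const.mul h3)).neg

/-- The limiting weight. -/
def Za (a x u : ℝ) : ℝ :=
  a ^ 2 * ((a + u)⁻¹) ^ 2 * Real.exp (2 * x * (a + u)⁻¹ - 2 * a⁻¹)

theorem Fs_Gm_zero (c m x u : ℝ) (hu : 0 < u) :
    Fs (Gm c m) 0 (x, u) = chi m (x * (u⁻¹) ^ 2) * psi m (u⁻¹ - c) := by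
  have hE : 2 * (x * (u⁻¹) ^ 2) * (u⁻¹)⁻¹ + 2 * u⁻¹ = 2 * x * u⁻¹ + 2 * u⁻¹ := by
    field_simp
  simp only [Fs, Gm, Ew, add_zero]
  rw [hE, Real.exp_neg]
  have := Real.exp_ne_zero (2 * x * u⁻¹ + 2 * u⁻¹)
  field_simp

theorem Fs_Gm_c (a m x u : ℝ) (ha : 0 < a) (hu : 0 < u) :
    Fs (Gm a⁻¹ m) a⁻¹ (x, u) = Za a x u * (chi m (x * (u⁻¹) ^ 2) * psi m (u⁻¹)) := by
  have hE : Real.exp (2 * x * (a + u)⁻¹ - 2 * a⁻¹) = Real.exp (2 * x * u⁻¹ + 2 * u⁻¹) *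
      Real.exp (-(2 * (x * (u⁻¹) ^ 2) * (u⁻¹ + a⁻¹)⁻¹ + 2 * (u⁻¹ + a⁻¹))) := by
    rw [← Real.exp_add]
    congr 1
    have : u⁻¹ + a⁻¹ = (a + u) / (u * a) := by field_simp
    rw [this]
    field_simp
    ring
  simp only [Fs, Gm, Ew, Za, add_sub_cancel_right]
  rw [hE]
  have : u⁻¹ ^ 2 * ((u⁻¹ + a⁻¹)⁻¹) ^ 2 = a ^ 2 * ((a + u)⁻¹) ^ 2 := by
    have : u⁻¹ + a⁻¹ = (a + u) / (u * a) := by field_simp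
    rw [this]
    field_simp
  rw [← this]
  ring

theorem cutoff_eq {Ω : Type*} [MeasurableSpace Ω] {P : Measure Ω} {B : ℝ → Ω → ℝ}
    [IsProbabilityMeasure P]
    (hB : IsBrownianMotion P B) (t : ℝ) (ht : 0 < t) (a m : ℝ) (ha : 0 < a) (hm : 0 < m) :
    Integrable (fun ω => Za a (Nf B t ω) (Adrift B 1 t ω) *
      (chi m (Nf B t ω * ((Adrift B 1 t ω)⁻¹) ^ 2) * psi m ((Adrift B 1 t ω)⁻¹))) P ∧
    ∫ ω, Za a (Nf B t ω) (Adrift B 1 t ω) *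
      (chi m (Nf B t ω * ((Adrift B 1 t ω)⁻¹) ^ 2) * psi m ((Adrift B 1 t ω)⁻¹)) ∂P =
    ∫ ω, chi m (Nf B t ω * ((Adrift B 1 t ω)⁻¹) ^ 2) * psi m ((Adrift B 1 t ω)⁻¹ - a⁻¹) ∂P := by
  have hc : 0 < a⁻¹ := by positivity
  have hδ : 0 < m⁻¹ := by positivity
  have e1 : ∀ ω, Za a (Nf B t ω) (Adrift B 1 t ω) *
      (chi m (Nf B t ω * ((Adrift B 1 t ω)⁻¹) ^ 2) * psi m ((Adrift B 1 t ω)⁻¹)) =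
      Fs (Gm a⁻¹ m) a⁻¹ (Nf B t ω, Adrift B 1 t ω) := fun ω =>
    (Fs_Gm_c a m _ _ ha (Adrift_pos hB t ht ω)).symm
  have e2 : ∀ ω, chi m (Nf B t ω * ((Adrift B 1 t ω)⁻¹) ^ 2) * psi m ((Adrift B 1 t ω)⁻¹ - a⁻¹) =
      Fs (Gm a⁻¹ m) 0 (Nf B t ω, Adrift B 1 t ω) := fun ω =>
    (Fs_Gm_zero a⁻¹ m _ _ (Adrift_pos hB t ht ω)).symm
  simp_rw [e1, e2]
  have hG := contDiff_Gm a⁻¹ m hc hm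
  refine ⟨?_, flow_eq hB t ht (Gm a⁻¹ m) hG a⁻¹ m⁻¹ m hδ hm hc (Gm_zero a⁻¹ m hm)⟩
  exact integrable_comp_NA hB t ht _
    (contDiff_Fs _ hG a⁻¹ m⁻¹ m hδ hm hc (Gm_zero a⁻¹ m hm) _ (by linarith) (by linarith)).continuous
    (hcs_Fs _ a⁻¹ m⁻¹ m hδ hm hc (Gm_zero a⁻¹ m hm) _ (by linarith))


theorem Za_nonneg (a x u : ℝ) : 0 ≤ Za a x u := by unfold Za; positivity

theorem limit_eq {Ω : Type*} [MeasurableSpace Ω] {P : Measure Ω} {B : ℝ → Ω → ℝ}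
    [IsProbabilityMeasure P]
    (hB : IsBrownianMotion P B) (t : ℝ) (ht : 0 < t) (a : ℝ) (ha : 0 < a) :
    Integrable (fun ω => Za a (Nf B t ω) (Adrift B 1 t ω)) P ∧
    ∫ ω, Za a (Nf B t ω) (Adrift B 1 t ω) ∂P = P.real {ω | Adrift B 1 t ω < a} := by
  have hN := measurable_Nf hB t
  have hA := measurable_Adrift hB t ht
  have hZm : Measurable fun ω => Za a (Nf B t ω) (Adrift B 1 t ω) := by
    unfold Za; fun_prop
  have hchim : ∀ m : ℝ, Measurable fun ω => chi m (Nf B t ω * ((Adrift B 1 t ω)⁻¹) ^ 2) :=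
    fun m => (continuous_chi m).measurable.comp (by fun_prop)
  have hpsim : ∀ m c : ℝ, Measurable fun ω => psi m ((Adrift B 1 t ω)⁻¹ - c) :=
    fun m c => (continuous_psi m).measurable.comp (by fun_prop)
  have hpsim0 : ∀ m : ℝ, Measurable fun ω => psi m ((Adrift B 1 t ω)⁻¹) :=
    fun m => (continuous_psi m).measurable.comp (by fun_prop)
  set H : ℕ → Ω → ℝ := fun n ω => Za a (Nf B t ω) (Adrift B 1 t ω) *
      (chi (n + 1) (Nf B t ω * ((Adrift B 1 t ω)⁻¹) ^ 2) * psi (n + 1) ((Adrift B 1 t ω)⁻¹))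
    with hH
  set K : ℕ → Ω → ℝ := fun n ω => chi (n + 1) (Nf B t ω * ((Adrift B 1 t ω)⁻¹) ^ 2) *
    psi (n + 1) ((Adrift B 1 t ω)⁻¹ - a⁻¹) with hK
  have hcut : ∀ n, Integrable (H n) P ∧ ∫ ω, H n ω ∂P = ∫ ω, K n ω ∂P := fun n =>
    cutoff_eq hB t ht a (n + 1) ha (by positivity)
  have hH0 : ∀ n ω, 0 ≤ H n ω := fun n ω =>
    mul_nonneg (Za_nonneg _ _ _) (mul_nonneg (chi_nonneg _ _) (psi_nonneg _ _))
  have hHle : ∀ n ω, H n ω ≤ Za a (Nf B t ω) (Adrift B 1 t ω) := fun n ω =>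
    mul_le_of_le_one_right (Za_nonneg _ _ _)
      (mul_le_one₀ (chi_le_one _ _) (psi_nonneg _ _) (psi_le_one _ _))
  have hK0 : ∀ n ω, 0 ≤ K n ω := fun n ω => mul_nonneg (chi_nonneg _ _) (psi_nonneg _ _)
  have hK1 : ∀ n ω, K n ω ≤ 1 := fun n ω =>
    mul_le_one₀ (chi_le_one _ _) (psi_nonneg _ _) (psi_le_one _ _)
  have hKm : ∀ n, Measurable (K n) := fun n => (hchim _).mul (hpsim _ _)
  have hHlim : ∀ ω, Tendsto (fun n => H n ω) atTop (𝓝 (Za a (Nf B t ω) (Adrift B 1 t ω))) := by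
    intro ω
    have := ((tendsto_chi (Nf B t ω * ((Adrift B 1 t ω)⁻¹) ^ 2)).mul
      (tendsto_psi _ (inv_pos.2 (Adrift_pos hB t ht ω)))).const_mul
        (Za a (Nf B t ω) (Adrift B 1 t ω))
    rw [mul_one, mul_one] at this
    exact this
  have hKlim : ∀ ω, Tendsto (fun n => K n ω) atTop
      (𝓝 ({ω | Adrift B 1 t ω < a}.indicator (fun _ => (1:ℝ)) ω)) := by
    intro ω
    have := (tendsto_chi (Nf B t ω * ((Adrift B 1 t ω)⁻¹) ^ 2)).mul
      (tendsto_psi' ((Adrift B 1 t ω)⁻¹ - a⁻¹))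
    rw [one_mul] at this
    have e : (0 < (Adrift B 1 t ω)⁻¹ - a⁻¹) ↔ Adrift B 1 t ω < a := by
      rw [sub_pos, inv_lt_inv₀ ha (Adrift_pos hB t ht ω)]
    simp only [e] at this
    rw [Set.indicator_apply]
    exact this
  have hS : MeasurableSet {ω | Adrift B 1 t ω < a} := measurableSet_lt hA measurable_const
  have hKint : Tendsto (fun n => ∫ ω, K n ω ∂P) atTop (𝓝 (P.real {ω | Adrift B 1 t ω < a})) := by
    have := tendsto_integral_of_dominated_convergence (μ := P) (fun _ => (1:ℝ))
      (fun n => (hKm n).aestronglyMeasurable) (integrable_const 1)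
      (fun n => Eventually.of_forall fun ω => by
        rw [Real.norm_of_nonneg (hK0 n ω)]; exact hK1 n ω)
      (Eventually.of_forall hKlim)
    rwa [integral_indicator_const _ hS, smul_eq_mul, mul_one] at this
  have hHn : ∀ n, ∫⁻ ω, ENNReal.ofReal (H n ω) ∂P ≤ 1 := by
    intro n
    rw [← ofReal_integral_eq_lintegral_ofReal (hcut n).1 (Eventually.of_forall (hH0 n)),
      (hcut n).2, ENNReal.ofReal_le_one]
    calc ∫ ω, K n ω ∂P ≤ ∫ ω, (1:ℝ) ∂P := by
          apply integral_mono_of_nonneg (Eventually.of_forall (hK0 n)) (integrable_const 1)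
            (Eventually.of_forall (hK1 n))
      _ = 1 := by simp
  have hZint : Integrable (fun ω => Za a (Nf B t ω) (Adrift B 1 t ω)) P := by
    refine ⟨hZm.aestronglyMeasurable, ?_⟩
    rw [hasFiniteIntegral_iff_ofReal (Eventually.of_forall fun ω => Za_nonneg _ _ _)]
    have h1 : ∫⁻ ω, ENNReal.ofReal (Za a (Nf B t ω) (Adrift B 1 t ω)) ∂P =
        ∫⁻ ω, liminf (fun n => ENNReal.ofReal (H n ω)) atTop ∂P := by
      congr 1
      ext ω
      exact (ENNReal.tendsto_ofReal (hHlim ω)).liminf_eq.symm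
    rw [h1]
    refine lt_of_le_of_lt (lintegral_liminf_le' fun n =>
      (hcut n).1.aestronglyMeasurable.aemeasurable.ennreal_ofReal) ?_
    refine lt_of_le_of_lt (b := 1) ?_ ENNReal.one_lt_top
    refine liminf_le_of_le (by isBoundedDefault) ?_
    intro b hb
    obtain ⟨n, hn⟩ := hb.exists
    exact hn.trans (hHn n)
  refine ⟨hZint, ?_⟩
  have hlim := tendsto_integral_of_dominated_convergence (μ := P)
      (fun ω => Za a (Nf B t ω) (Adrift B 1 t ω))
      (fun n => (hcut n).1.aestronglyMeasurable) hZint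
      (fun n => Eventually.of_forall fun ω => by
        rw [Real.norm_of_nonneg (hH0 n ω)]; exact hHle n ω)
      (Eventually.of_forall hHlim)
  simp_rw [fun n => (hcut n).2] at hlim
  exact tendsto_nhds_unique hlim hKint

theorem limit_eq_le {Ω : Type*} [MeasurableSpace Ω] {P : Measure Ω} {B : ℝ → Ω → ℝ}
    [IsProbabilityMeasure P]
    (hB : IsBrownianMotion P B) (t : ℝ) (ht : 0 < t) (a : ℝ) (ha : 0 < a) :
    ∫ ω, Za a (Nf B t ω) (Adrift B 1 t ω) ∂P = P.real {ω | Adrift B 1 t ω ≤ a} := by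
  have hA := measurable_Adrift hB t ht
  set r : ℕ → ℝ := fun n => a + 1 / ((n : ℝ) + 1) with hr
  have hr1 : ∀ n, a < r n := fun n => by
    have : (0:ℝ) < 1 / ((n : ℝ) + 1) := by positivity
    simp only [hr]; linarith
  have hr2 : ∀ n, r n ≤ a + 1 := fun n => by
    have : 1 / ((n : ℝ) + 1) ≤ 1 := by
      rw [div_le_one (by positivity)]
      have : (0:ℝ) ≤ n := n.cast_nonneg
      linarith
    simp only [hr]; linarith
  have hrlim : Tendsto r atTop (𝓝 a) := by
    have := (tendsto_one_div_add_atTop_nhds_zero_nat (𝕜 := ℝ)).const_add a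
    rw [add_zero] at this
    exact this
  have hZ := fun n => limit_eq hB t ht (r n) (ha.trans (hr1 n))
  have h1 : Tendsto (fun n => ∫ ω, Za (r n) (Nf B t ω) (Adrift B 1 t ω) ∂P) atTop
      (𝓝 (∫ ω, Za a (Nf B t ω) (Adrift B 1 t ω) ∂P)) := by
    refine tendsto_integral_of_dominated_convergence
      (fun ω => ((a + 1) ^ 2 / a ^ 2 * Real.exp (2 * a⁻¹)) * Za a (Nf B t ω) (Adrift B 1 t ω))
      (fun n => (hZ n).1.aestronglyMeasurable) ((limit_eq hB t ht a ha).1.const_mul _)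
      (fun n => Eventually.of_forall fun ω => ?_) (Eventually.of_forall fun ω => ?_)
    · rw [Real.norm_of_nonneg (Za_nonneg _ _ _)]
      have hu := Adrift_pos hB t ht ω
      have hx := Nf_pos B t ω
      have hrn := hr1 n
      have hrp := ha.trans hrn
      have e : (a + 1) ^ 2 / a ^ 2 * Real.exp (2 * a⁻¹) * Za a (Nf B t ω) (Adrift B 1 t ω) =
          (a + 1) ^ 2 * ((a + Adrift B 1 t ω)⁻¹) ^ 2 *
            Real.exp (2 * Nf B t ω * (a + Adrift B 1 t ω)⁻¹) := by
        rw [Za, Real.exp_sub]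
        have := Real.exp_ne_zero (2 * a⁻¹)
        field_simp
      rw [e, Za]
      have h3 : (r n + Adrift B 1 t ω)⁻¹ ≤ (a + Adrift B 1 t ω)⁻¹ := by gcongr
      have h4 : 2 * Nf B t ω * (r n + Adrift B 1 t ω)⁻¹ - 2 * (r n)⁻¹ ≤
          2 * Nf B t ω * (a + Adrift B 1 t ω)⁻¹ := by
        have : 2 * Nf B t ω * (r n + Adrift B 1 t ω)⁻¹ ≤
          2 * Nf B t ω * (a + Adrift B 1 t ω)⁻¹ := by gcongr
        have : 0 < (r n)⁻¹ := by positivity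
        linarith
      have h5 := hr2 n
      gcongr
    · have hu := Adrift_pos hB t ht ω
      have h1 : Tendsto (fun n => (r n + Adrift B 1 t ω)⁻¹) atTop
        (𝓝 (a + Adrift B 1 t ω)⁻¹) := (hrlim.add_const _).inv₀ (by positivity)
      have h2 : Tendsto (fun n => (r n)⁻¹) atTop (𝓝 a⁻¹) := hrlim.inv₀ ha.ne'
      exact ((hrlim.pow 2).mul (h1.pow 2)).mul
        ((Real.continuous_exp.tendsto _).comp ((h1.const_mul _).sub (h2.const_mul 2)))
  have h2 : Tendsto (fun n => P.real {ω | Adrift B 1 t ω < r n}) atTop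
      (𝓝 (P.real {ω | Adrift B 1 t ω ≤ a})) := by
    have hset : {ω | Adrift B 1 t ω ≤ a} = ⋂ n, {ω | Adrift B 1 t ω < r n} := by
      ext ω
      simp only [Set.mem_ofPred_eq, Set.mem_iInter]
      exact ⟨fun h n => h.trans_lt (hr1 n), fun h => ge_of_tendsto' hrlim fun n => (h n).le⟩
    rw [hset]
    refine (ENNReal.tendsto_toReal (measure_ne_top _ _)).comp ?_
    refine tendsto_measure_iInter_atTop
      (fun n => (measurableSet_lt hA measurable_const).nullMeasurableSet) ?_
      ⟨0, measure_ne_top _ _⟩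
    intro n k hnk ω hω
    have : r k ≤ r n := by
      simp only [hr]; gcongr
    exact lt_of_lt_of_le hω this
  simp_rw [fun n => (hZ n).2] at h1
  exact tendsto_nhds_unique h1 h2


theorem second_term_eq (hB : IsBrownianMotion P B) (t a : ℝ) (ht : 0 < t) (ha : 0 < a) :
    1 / 2 * Real.exp (-2 / a) *
      ∫ ω, M B t ω * (a / 2 + A B t ω / 2)⁻¹ ^ 2 *
            Real.exp (M B t ω / (a / 2 + A B t ω / 2)) ∂P
      = 2 / a ^ 2 * (P {ω | Adrift B 1 t ω ≤ a}).toReal := by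
  haveI := hB.isProbabilityMeasure
  have hg := girsanov hB t ht
    (fun z => (a / 2 + z.2 / 2)⁻¹ ^ 2 * Real.exp (z.1 / (a / 2 + z.2 / 2))) (by fun_prop)
  simp only [← mul_assoc] at hg
  rw [hg]
  have hl := limit_eq_le hB t ht a ha
  rw [Measure.real] at hl
  rw [← hl, ← integral_const_mul, ← integral_const_mul]
  congr 1
  ext ω
  have hu := Adrift_pos hB t ht ω
  rw [Za, Real.exp_sub]
  have e1 : Nf B t ω / (a / 2 + Adrift B 1 t ω / 2) = 2 * Nf B t ω * (a + Adrift B 1 t ω)⁻¹ := by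
    field_simp
  have e2 : -2 / a = -(2 * a⁻¹) := by field_simp
  rw [e1, e2, Real.exp_neg]
  have := Real.exp_ne_zero (2 * a⁻¹)
  have h3 : a / 2 + Adrift B 1 t ω / 2 = (a + Adrift B 1 t ω) / 2 := by ring
  rw [h3]
  field_simp
  try norm_num
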